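/- Let c be the cost vector with c_i = i - 1 for all i ≥ 1. For every ε > 0 there exists N such that for every n ≥ N, every simple graph G on n vertices admits a partition of its edge set into cliques Q_1, Q_2, …, Q_m such that Σ_{j=1}^m (|V(Q_j)| - 1) ≤ (1 + ε)·n²/4; equivalently, π_2(G, c) ≤ (1 + ε)·n²/4. -/

import Mathlib

open scoped Classical
open Finset

/-- `K` is a clique of `G`: a nonempty set of pairwise adjacent vertices. -/
def IsCliqueOf {V : Type} [Fintype V] [DecidableEq V] (G : SimpleGraph V) (K : Finset V) : Prop :=
  K.Nonempty ∧ G.IsClique (K : Set V)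

/-- Total `c`-cost of a weighting `f` of the finsets of vertices. -/
noncomputable def cliqueCost {V : Type} [Fintype V] [DecidableEq V]
    (c : ℕ → ℝ) (f : Finset V → ℝ) : ℝ :=
  ∑ K : Finset V, c K.card * f K

/-- `f` is a fractional `t`-clique cover of `G`. -/
def IsFracCover {V : Type} [Fintype V] [DecidableEq V]
    (t : ℕ) (G : SimpleGraph V) (f : Finset V → ℝ) : Prop :=
  (∀ K, 0 ≤ f K) ∧ (∀ K, ¬ IsCliqueOf G K → f K = 0) ∧
  ∀ T : Finset V, T.card = t → G.IsClique (T : Set V) →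
    1 ≤ ∑ K ∈ Finset.univ.filter (fun K => T ⊆ K), f K

/-- `f` is a fractional `t`-clique decomposition of `G`. -/
def IsFracDecomp {V : Type} [Fintype V] [DecidableEq V]
    (t : ℕ) (G : SimpleGraph V) (f : Finset V → ℝ) : Prop :=
  (∀ K, 0 ≤ f K) ∧ (∀ K, ¬ IsCliqueOf G K → f K = 0) ∧
  ∀ T : Finset V, T.card = t → G.IsClique (T : Set V) →
    ∑ K ∈ Finset.univ.filter (fun K => T ⊆ K), f K = 1

/-- `f` is an integer (`{0,1}`-valued) `t`-clique cover of `G`. -/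
def IsIntCover {V : Type} [Fintype V] [DecidableEq V]
    (t : ℕ) (G : SimpleGraph V) (f : Finset V → ℝ) : Prop :=
  IsFracCover t G f ∧ ∀ K, f K = 0 ∨ f K = 1

/-- `f` is an integer (`{0,1}`-valued) `t`-clique decomposition of `G`. -/
def IsIntDecomp {V : Type} [Fintype V] [DecidableEq V]
    (t : ℕ) (G : SimpleGraph V) (f : Finset V → ℝ) : Prop :=
  IsFracDecomp t G f ∧ ∀ K, f K = 0 ∨ f K = 1

/-- θ*_t(G,c): minimum total c-cost of a fractional t-clique cover. -/
noncomputable def thetaFrac {V : Type} [Fintype V] [DecidableEq V]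
    (t : ℕ) (G : SimpleGraph V) (c : ℕ → ℝ) : ℝ :=
  sInf { x | ∃ f, IsFracCover t G f ∧ x = cliqueCost c f }

/-- θ_t(G,c): minimum total c-cost of an integer t-clique cover. -/
noncomputable def thetaInt {V : Type} [Fintype V] [DecidableEq V]
    (t : ℕ) (G : SimpleGraph V) (c : ℕ → ℝ) : ℝ :=
  sInf { x | ∃ f, IsIntCover t G f ∧ x = cliqueCost c f }

/-- π*_t(G,c): minimum total c-cost of a fractional t-clique decomposition. -/
noncomputable def piFrac {V : Type} [Fintype V] [DecidableEq V]
    (t : ℕ) (G : SimpleGraph V) (c : ℕ → ℝ) : ℝ :=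
  sInf { x | ∃ f, IsFracDecomp t G f ∧ x = cliqueCost c f }

/-- π_t(G,c): minimum total c-cost of an integer t-clique decomposition. -/
noncomputable def piInt {V : Type} [Fintype V] [DecidableEq V]
    (t : ℕ) (G : SimpleGraph V) (c : ℕ → ℝ) : ℝ :=
  sInf { x | ∃ f, IsIntDecomp t G f ∧ x = cliqueCost c f }

/-- `G` is complete multipartite: vertices can be assigned to parts so that
adjacency holds exactly between distinct parts. -/
def IsCompleteMultipartite {V : Type} [Fintype V] [DecidableEq V]
    (G : SimpleGraph V) : Prop :=
  ∃ p : V → ℕ, ∀ u v, G.Adj u v ↔ p u ≠ p v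

/-
A linear programming dual of the fractional edge-clique decomposition problem on `m` vertices is a
weighting of the edges in which every clique on `k` vertices has weight at most `k - 1`. The
Lagrangian of such a weighting is maximised by vertex weights supported on a clique, as in the
Motzkin–Straus proof of Turán's theorem, and this bounds the total edge weight by `m ^ 2 / 4`.
Hence every set of `m` vertices has a fractional decomposition of cost about `m ^ 2 / 4`. The
average of these over all `m`-sets is a fractional decomposition of the whole graph of cost about
`n ^ 2 / 4`, and any two edges lie together in cliques of total weight only `O(m / n)`. Such a
fractional decomposition is rounded by the semi-random method: choose each clique independently
with probability a small multiple of its weight, keep the cliques that meet no other chosen one,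
and iterate on the remaining edges.
-/

section Lagrangian

variable {V : Type*}

/-- The Lagrangian of the edge weighting `a` on the vertex set `K`, a quadratic form in the vertex
weights `x`. Every edge is counted in both directions. -/
def lagrangian (a : V → V → ℝ) (K : Finset V) (x : V → ℝ) : ℝ :=
  ∑ u ∈ K, ∑ v ∈ K, a u v * (x u * x v)

lemma sum_sum_eq_sum_sum_erase_add {b : V → V → ℝ} {K : Finset V} {q : V} (hq : q ∈ K)
    (hdiag : b q q = 0) (hsymm : ∀ w, b w q = b q w) :
    ∑ u ∈ K, ∑ v ∈ K, b u v =
      ∑ u ∈ K.erase q, ∑ v ∈ K.erase q, b u v + 2 * ∑ w ∈ K.erase q, b q w := by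
  have hrow : ∀ u, ∑ v ∈ K, b u v = ∑ v ∈ K.erase q, b u v + b q u := fun u => by
    rw [← hsymm, sum_erase_add K _ hq]
  rw [← sum_erase_add K _ hq, hrow q, hdiag]
  simp only [hrow, sum_add_distrib]
  ring

lemma sum_mul_min_eq_of_forall_le (a : V → V → ℝ) {K : Finset V} {x : V → ℝ} {i : V} (hi : i ∈ K)
    (hmin : ∀ u ∈ K, x i ≤ x u) :
    ∑ u ∈ K, ∑ v ∈ K, a u v * min (x u) (x v) =
      x i * ∑ u ∈ K, ∑ v ∈ K, a u v +
        ∑ u ∈ K.erase i, ∑ v ∈ K.erase i, a u v * min (x u - x i) (x v - x i) := by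
  have hshift : ∀ u v, a u v * min (x u) (x v) =
      x i * a u v + a u v * min (x u - x i) (x v - x i) := fun u v => by
    rw [min_sub_sub_right]; ring
  have hcol : ∀ u ∈ K, ∑ v ∈ K, a u v * min (x u - x i) (x v - x i) =
      ∑ v ∈ K.erase i, a u v * min (x u - x i) (x v - x i) := fun u hu => by
    rw [← sum_erase_add K _ hi, sub_self, min_eq_right (sub_nonneg.2 (hmin u hu)), mul_zero,
      add_zero]
  have hrow : ∑ v ∈ K.erase i, a i v * min (x i - x i) (x v - x i) = 0 :=
    sum_eq_zero fun v hv => by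
      rw [sub_self, min_eq_left (sub_nonneg.2 (hmin v (mem_of_mem_erase hv))), mul_zero]
  simp only [hshift, sum_add_distrib, ← mul_sum]
  rw [sum_congr rfl hcol, ← sum_erase_add K (fun u => ∑ v ∈ K.erase i, _) hi, hrow, add_zero]

-- Induction on `#K`, subtracting the smallest weight from all the others.
lemma sum_mul_min_le {a : V → V → ℝ} {l : ℝ} (hdiag : ∀ u, a u u = 0) {K : Finset V}
    (hK : ∀ L ⊆ K, L.Nonempty → ∑ u ∈ L, ∑ v ∈ L, a u v ≤ 2 * l * (#L - 1))
    {x : V → ℝ} (hx : ∀ u ∈ K, 0 ≤ x u) {j : V} (hj : j ∈ K) (hmax : ∀ u ∈ K, x u ≤ x j) :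
    ∑ u ∈ K, ∑ v ∈ K, a u v * min (x u) (x v) ≤ 2 * l * (∑ u ∈ K, x u - x j) := by
  induction hn : #K generalizing K x with
  | zero => simp_all
  | succ n ih =>
    rcases (K.erase j).eq_empty_or_nonempty with hE | hE
    · obtain rfl : K = {j} := by rw [← insert_erase hj, hE]; rfl
      simp [hdiag]
    obtain ⟨i, hi, hi_le⟩ := exists_min_image (K.erase j) x hE
    obtain ⟨hij, hiK⟩ := mem_erase.1 hi
    have hmin : ∀ u ∈ K, x i ≤ x u := fun u hu => by
      rcases eq_or_ne u j with rfl | huj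
      · exact hmax i hiK
      · exact hi_le u (mem_erase.2 ⟨huj, hu⟩)
    have hcard : #(K.erase i) = n := by rw [card_erase_of_mem hiK, hn, Nat.add_sub_cancel]
    have hrest := ih (K := K.erase i) (x := fun u => x u - x i)
      (fun L hL => hK L (hL.trans (erase_subset _ _)))
      (fun u hu => sub_nonneg.2 (hmin u (mem_of_mem_erase hu))) (mem_erase.2 ⟨hij.symm, hj⟩)
      (fun u hu => sub_le_sub_right (hmax u (mem_of_mem_erase hu)) _) hcard
    have hsum : ∑ u ∈ K.erase i, (x u - x i) = ∑ u ∈ K, x u - #K * x i := by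
      rw [← sum_erase_add K x hiK, sum_sub_distrib, sum_const, hcard, hn, nsmul_eq_mul]
      push_cast; ring
    have hmin_part := mul_le_mul_of_nonneg_left (hK K subset_rfl ⟨j, hj⟩) (hx i hiK)
    rw [sum_mul_min_eq_of_forall_le a hiK hmin]
    rw [hsum] at hrest
    linarith

lemma lagrangian_le_of_forall_subset_le {a : V → V → ℝ} {l : ℝ} (hl : 0 ≤ l)
    (hdiag : ∀ u, a u u = 0) (ha : ∀ u v, 0 ≤ a u v) {K : Finset V}
    (hK : ∀ L ⊆ K, L.Nonempty → ∑ u ∈ L, ∑ v ∈ L, a u v ≤ 2 * l * (#L - 1))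
    {x : V → ℝ} (hx : ∀ u ∈ K, 0 ≤ x u) :
    lagrangian a K x ≤ l / 2 * (∑ u ∈ K, x u) ^ 2 := by
  rcases K.eq_empty_or_nonempty with rfl | hne
  · simp [lagrangian]
  obtain ⟨j, hj, hmax⟩ := exists_max_image K x hne
  have hmul_le : ∀ u ∈ K, ∀ v ∈ K, x u * x v ≤ x j * min (x u) (x v) := fun u hu v hv => by
    rw [← max_mul_min]
    exact mul_le_mul_of_nonneg_right (max_le (hmax u hu) (hmax v hv)) (le_min (hx u hu) (hx v hv))
  calc lagrangian a K x
      ≤ ∑ u ∈ K, ∑ v ∈ K, a u v * (x j * min (x u) (x v)) :=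
        sum_le_sum fun u hu => sum_le_sum fun v hv =>
          mul_le_mul_of_nonneg_left (hmul_le u hu v hv) (ha u v)
    _ = x j * ∑ u ∈ K, ∑ v ∈ K, a u v * min (x u) (x v) := by
        simp only [mul_sum, mul_left_comm]
    _ ≤ x j * (2 * l * (∑ u ∈ K, x u - x j)) :=
        mul_le_mul_of_nonneg_left (sum_mul_min_le hdiag hK hx hj hmax) (hx j hj)
    _ ≤ l / 2 * (∑ u ∈ K, x u) ^ 2 := by
        linarith [mul_nonneg hl (sq_nonneg (∑ u ∈ K, x u - 2 * x j))]

lemma lagrangian_le_lagrangian_erase {a : V → V → ℝ} (hdiag : ∀ u, a u u = 0)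
    (hsymm : ∀ u v, a u v = a v u) {K : Finset V} {x : V → ℝ} {p q : V} (hp : p ∈ K) (hq : q ∈ K)
    (hpq : p ≠ q) (hapq : a p q = 0) (hxq : 0 ≤ x q)
    (hle : ∑ w ∈ K, a q w * x w ≤ ∑ w ∈ K, a p w * x w) :
    lagrangian a K x ≤ lagrangian a (K.erase q) (Function.update x p (x p + x q)) := by
  have hpD : p ∈ K.erase q := mem_erase.2 ⟨hpq, hp⟩
  have haqp : a q p = 0 := hsymm p q ▸ hapq
  have hsplit : ∀ {D : Finset V} {w : V} (y : V → ℝ), w ∈ D → lagrangian a D y =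
      lagrangian a (D.erase w) y + 2 * (y w * ∑ v ∈ D.erase w, a w v * y v) := fun {D w} y hw => by
    rw [lagrangian, sum_sum_eq_sum_sum_erase_add hw (by rw [hdiag, zero_mul])
      fun v => by rw [hsymm, mul_comm (y v)], mul_sum _ _ (y w)]
    simp only [mul_left_comm (a w _), lagrangian]
  set y := Function.update x p (x p + x q) with hy
  have hyp : y p = x p + x q := Function.update_self ..
  have hyx : ∀ w ∈ (K.erase q).erase p, y w = x w := fun w hw =>
    Function.update_of_ne (ne_of_mem_erase hw) ..
  have hlag : lagrangian a ((K.erase q).erase p) y = lagrangian a ((K.erase q).erase p) x :=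
    sum_congr rfl fun u hu => sum_congr rfl fun v hv => by rw [hyx u hu, hyx v hv]
  have hrow : ∑ v ∈ (K.erase q).erase p, a p v * y v = ∑ v ∈ (K.erase q).erase p, a p v * x v :=
    sum_congr rfl fun v hv => by rw [hyx v hv]
  rw [← sum_erase_add K _ hq, ← sum_erase_add K _ hq, ← sum_erase_add _ _ hpD,
    ← sum_erase_add _ _ hpD, hdiag, hdiag, hapq, haqp] at hle
  rw [hsplit x hq, hsplit x hpD, hsplit y hpD, hlag, hrow, hyp, ← sum_erase_add _ _ hpD, haqp]
  linarith [mul_le_mul_of_nonneg_left hle hxq]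

/-- A weighted form of the Motzkin–Straus theorem: the weight of a pair of vertices that are not
joined can be moved to one of them without decreasing the Lagrangian. -/
lemma lagrangian_le_of_forall_pairwise_pos {a : V → V → ℝ} {l : ℝ} (hl : 0 ≤ l)
    (hdiag : ∀ u, a u u = 0) (hsymm : ∀ u v, a u v = a v u) (ha : ∀ u v, 0 ≤ a u v)
    {K : Finset V} (hK : ∀ L ⊆ K, L.Nonempty → (L : Set V).Pairwise (fun u v => 0 < a u v) →
      ∑ u ∈ L, ∑ v ∈ L, a u v ≤ 2 * l * (#L - 1))
    {x : V → ℝ} (hx : ∀ u ∈ K, 0 ≤ x u) :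
    lagrangian a K x ≤ l / 2 * (∑ u ∈ K, x u) ^ 2 := by
  induction hn : #K generalizing K x with
  | zero => simp [card_eq_zero.1 hn, lagrangian]
  | succ n ih =>
    by_cases hclique : (K : Set V).Pairwise fun u v => 0 < a u v
    · exact lagrangian_le_of_forall_subset_le hl hdiag ha
        (fun L hL hLne => hK L hL hLne (hclique.mono (coe_subset.2 hL))) hx
    have merge : ∀ p ∈ K, ∀ q ∈ K, p ≠ q → a p q = 0 →
        ∑ w ∈ K, a q w * x w ≤ ∑ w ∈ K, a p w * x w →
        lagrangian a K x ≤ l / 2 * (∑ u ∈ K, x u) ^ 2 := by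
      intro p hp q hq hpq hapq hle
      set y := Function.update x p (x p + x q) with hy
      have hpD : p ∈ K.erase q := mem_erase.2 ⟨hpq, hp⟩
      have hy_nonneg : ∀ w ∈ K.erase q, 0 ≤ y w := fun w hw => by
        rcases eq_or_ne w p with rfl | hwp
        · rw [hy, Function.update_self]
          exact add_nonneg (hx w hp) (hx q hq)
        · rw [hy, Function.update_of_ne hwp]
          exact hx w (mem_of_mem_erase hw)
      have hy_sum : ∑ w ∈ K.erase q, y w = ∑ w ∈ K, x w := by
        rw [hy, sum_update_of_mem hpD, sdiff_singleton_eq_erase, ← sum_erase_add K x hq,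
          ← sum_erase_add _ x hpD]
        ring
      rw [← hy_sum]
      exact (lagrangian_le_lagrangian_erase hdiag hsymm hp hq hpq hapq (hx q hq) hle).trans
        (ih (fun L hL => hK L (hL.trans (erase_subset _ _))) hy_nonneg (by
          rw [card_erase_of_mem hq, hn, Nat.add_sub_cancel]))
    simp only [Set.Pairwise, not_forall, not_lt] at hclique
    obtain ⟨u, hu, v, hv, huv, hauv⟩ := hclique
    have hauv : a u v = 0 := le_antisymm hauv (ha u v)
    rcases le_total (∑ w ∈ K, a v w * x w) (∑ w ∈ K, a u w * x w) with h | h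
    · exact merge u hu v hv huv hauv h
    · exact merge v hv u hu huv.symm (hsymm u v ▸ hauv) h

lemma sum_pairs_eq_two_mul_sum_powersetCard (b : Finset V → ℝ) (K : Finset V) :
    ∑ u ∈ K, ∑ v ∈ K, (if u = v then 0 else b {u, v}) = 2 * ∑ T ∈ K.powersetCard 2, b T := by
  have hmaps : ∀ p ∈ K.offDiag, {p.1, p.2} ∈ K.powersetCard 2 := fun p hp => by
    rw [mem_offDiag] at hp
    exact mem_powersetCard.2 ⟨insert_subset hp.1 (singleton_subset_iff.2 hp.2.1), card_pair hp.2.2⟩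
  have hfiber : ∀ T ∈ K.powersetCard 2,
      ∑ p ∈ K.offDiag with ({p.1, p.2} : Finset V) = T, b {p.1, p.2} = 2 * b T := fun T hT => by
    obtain ⟨hTK, hT2⟩ := mem_powersetCard.1 hT
    have hfilter : {p ∈ K.offDiag | ({p.1, p.2} : Finset V) = T} = T.offDiag := by
      ext ⟨u, v⟩
      simp only [mem_filter, mem_offDiag]
      refine ⟨?_, fun ⟨hu, hv, huv⟩ => ⟨⟨hTK hu, hTK hv, huv⟩, ?_⟩⟩
      · rintro ⟨⟨-, -, huv⟩, rfl⟩
        simp [huv]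
      · exact eq_of_subset_of_card_le (insert_subset hu (singleton_subset_iff.2 hv))
          (by rw [hT2, card_pair huv])
    rw [sum_congr rfl fun p hp => by rw [(mem_filter.1 hp).2], hfilter, sum_const, offDiag_card,
      hT2, nsmul_eq_mul]
    norm_num
  calc ∑ u ∈ K, ∑ v ∈ K, (if u = v then 0 else b {u, v})
      = ∑ p ∈ K.offDiag, b {p.1, p.2} := by
        rw [← sum_product', ← diag_union_offDiag, sum_union (disjoint_diag_offDiag K),
          sum_eq_zero fun p hp => if_pos (mem_diag.1 hp).2, zero_add]
        exact sum_congr rfl fun p hp => if_neg (mem_offDiag.1 hp).2.2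
    _ = 2 * ∑ T ∈ K.powersetCard 2, b T := by
        rw [← sum_fiberwise_of_maps_to hmaps, sum_congr rfl hfiber, mul_sum]

lemma sum_powersetCard_two_le {b : Finset V → ℝ} (hb : ∀ T, 0 ≤ b T) {l : ℝ} (hl : 0 ≤ l)
    {A : Finset V} (hA : ∀ K ⊆ A, 2 ≤ #K → (∀ T ∈ K.powersetCard 2, 0 < b T) →
      ∑ T ∈ K.powersetCard 2, b T ≤ l * (#K - 1)) :
    ∑ T ∈ A.powersetCard 2, b T ≤ l * ((#A : ℝ) ^ 2 / 4) := by
  have h := lagrangian_le_of_forall_pairwise_pos (a := fun u v => if u = v then 0 else b {u, v})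
    (K := A) (x := fun _ => 1) hl (by simp) (fun u v => by simp [eq_comm, pair_comm])
    (fun u v => by split_ifs; exacts [le_rfl, hb _]) (fun K hKA hK hpos => ?_)
    fun _ _ => zero_le_one
  · simp only [lagrangian, mul_one, sum_const, nsmul_eq_mul,
      sum_pairs_eq_two_mul_sum_powersetCard] at h
    linarith
  · rw [sum_pairs_eq_two_mul_sum_powersetCard, mul_assoc]
    refine mul_le_mul_of_nonneg_left ?_ zero_le_two
    rcases (Nat.succ_le_of_lt hK.card_pos).eq_or_lt with h1 | h2
    · rw [powersetCard_eq_empty.2 (by omega), ← h1]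
      simp
    · refine hA K hKA h2 fun T hT => ?_
      obtain ⟨hTK, hT2⟩ := mem_powersetCard.1 hT
      obtain ⟨u, v, huv, rfl⟩ := card_eq_two.1 hT2
      simpa [huv] using hpos (hTK (mem_insert_self u _)) (hTK (by simp)) huv

end Lagrangian

lemma one_sub_prod_le_sum_one_sub {α : Type*} (s : Finset α) {g : α → ℝ} (h0 : ∀ a, 0 ≤ g a)
    (h1 : ∀ a, g a ≤ 1) : 1 - ∏ a ∈ s, g a ≤ ∑ a ∈ s, (1 - g a) := by
  induction s using Finset.induction_on with
  | empty => simp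
  | insert a s ha ih =>
    rw [prod_insert ha, sum_insert ha]
    have hprod : ∏ a ∈ s, g a ≤ 1 := prod_le_one (fun a _ => h0 a) fun a _ => h1 a
    linarith [mul_nonneg (sub_nonneg.2 (h1 a)) (sub_nonneg.2 hprod)]

-- Only an approximate solution is claimed, which avoids proving that finitely generated cones are
-- closed.
lemma exists_nonneg_norm_sum_smul_sub_lt {ι F : Type*} [Fintype ι] [NormedAddCommGroup F]
    [NormedSpace ℝ F] (a : ι → F) (b : F)
    (hdual : ∀ φ : StrongDual ℝ F, (∀ i, 0 ≤ φ (a i)) → 0 ≤ φ b) {κ : ℝ} (hκ : 0 < κ) :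
    ∃ g : ι → ℝ, (∀ i, 0 ≤ g i) ∧ ‖∑ i, g i • a i - b‖ < κ := by
  set A : (ι → ℝ) →L[ℝ] F := LinearMap.toContinuousLinearMap (Fintype.linearCombination ℝ a)
  have hA_apply : ∀ g, A g = ∑ i, g i • a i := fun g => Fintype.linearCombination_apply ℝ a g
  have hmem : b ∈ (ProperCone.positive ℝ (ι → ℝ)).map A := by
    by_contra hb
    obtain ⟨φ, hφ, hφb⟩ := ProperCone.hyperplane_separation_point _ hb
    refine hφb.not_ge (hdual φ fun i => hφ _ (subset_closure ⟨Pi.single i 1, ?_, ?_⟩))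
    · exact Pi.single_nonneg.2 zero_le_one
    · exact (hA_apply _).trans (by simp [Pi.single_apply])
  obtain ⟨_, ⟨g, hg, rfl⟩, hgb⟩ := Metric.mem_closure_iff.1 hmem κ hκ
  refine ⟨g, hg, ?_⟩
  rwa [dist_comm, dist_eq_norm] at hgb

/-- A family of weighted finite subsets ("blocks") of `E`, each with at most `r` points and of cost
at most its number of points, among which are all singletons. -/
structure PartitionSystem (E ι : Type*) (r : ℕ) where
  block : ι → Finset E
  cost : ι → ℝ
  single : E → ι
  block_single : ∀ v, block (single v) = {v}
  cost_nonneg : ∀ i, 0 ≤ cost i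
  cost_le_card : ∀ i, cost i ≤ #(block i)
  card_le : ∀ i, #(block i) ≤ r

namespace PartitionSystem

variable {E ι : Type*} {r : ℕ}

/-- `S.HasPartition U κ` says that `U` can be partitioned into blocks of total cost at most `κ`. -/
def HasPartition (S : PartitionSystem E ι r) (U : Finset E) (κ : ℝ) : Prop :=
  ∃ M : Finset ι, (M : Set ι).PairwiseDisjoint S.block ∧ M.biUnion S.block = U ∧
    ∑ i ∈ M, S.cost i ≤ κ

/-- The weighting that gives the singleton block of each point `v ∈ U` the weight `d v`. -/
noncomputable def singletonWeight (S : PartitionSystem E ι r) (U : Finset E) (d : E → ℝ) (i : ι) :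
    ℝ :=
  ∑ v ∈ U with S.single v = i, d v

lemma sum_mul_singletonWeight (S : PartitionSystem E ι r) (U : Finset E) (A : Finset ι) (F : ι → ℝ)
    (d : E → ℝ) :
    ∑ i ∈ A, F i * S.singletonWeight U d i =
      ∑ v ∈ U with S.single v ∈ A, F (S.single v) * d v := by
  simp only [singletonWeight, mul_sum]
  rw [sum_comm' (s' := fun v => {S.single v}) (t' := {v ∈ U | S.single v ∈ A})
    fun i v => by simp only [mem_filter, mem_singleton]; grind]
  simp only [sum_singleton]

lemma sum_singletonWeight (S : PartitionSystem E ι r) (U : Finset E) (A : Finset ι) (d : E → ℝ) :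
    ∑ i ∈ A, S.singletonWeight U d i = ∑ v ∈ U with S.single v ∈ A, d v := by
  simpa using S.sum_mul_singletonWeight U A 1 d

variable [Fintype ι] (S : PartitionSystem E ι r)

/-- The degree of the point `v` in a weighting `f` of the blocks. -/
noncomputable def deg (f : ι → ℝ) (v : E) : ℝ := ∑ i with v ∈ S.block i, f i

/-- The codegree of the points `u` and `v` in a weighting `f` of the blocks. -/
noncomputable def codeg (f : ι → ℝ) (u v : E) : ℝ :=
  ∑ i with u ∈ S.block i ∧ v ∈ S.block i, f i

/-- The total cost of a weighting `f` of the blocks. -/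
noncomputable def total (f : ι → ℝ) : ℝ := ∑ i, S.cost i * f i

/-- A nonnegative weighting of the blocks contained in `U`. -/
structure IsWeighting (U : Finset E) (f : ι → ℝ) : Prop where
  nonneg : ∀ i, 0 ≤ f i
  block_subset : ∀ i, f i ≠ 0 → S.block i ⊆ U

/-- A fractional partition of `U` into blocks: a weighting with all degrees equal to `1`. -/
structure IsFracPartition (U : Finset E) (f : ι → ℝ) : Prop extends S.IsWeighting U f where
  deg_eq_one : ∀ v ∈ U, S.deg f v = 1

variable {S} {U : Finset E} {f : ι → ℝ}

lemma IsWeighting.total_nonneg (hf : S.IsWeighting U f) : 0 ≤ S.total f :=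
  sum_nonneg fun i _ => mul_nonneg (S.cost_nonneg i) (hf.nonneg i)

lemma IsWeighting.sum_mul_deg (hf : S.IsWeighting U f) (g : E → ℝ) :
    ∑ v ∈ U, g v * S.deg f v = ∑ i, f i * ∑ v ∈ S.block i, g v := by
  have hblock : ∀ i, ∑ v ∈ U with v ∈ S.block i, g v * f i = f i * ∑ v ∈ S.block i, g v :=
    fun i => by
      rw [← sum_mul, mul_comm]
      rcases eq_or_ne (f i) 0 with hi | hi
      · rw [hi, zero_mul, zero_mul]
      · rw [filter_mem_eq_inter, inter_eq_right.2 (hf.block_subset i hi)]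
  simp only [deg, mul_sum, ← hblock]
  exact sum_comm' fun v i => by simp [and_comm]

lemma IsWeighting.sum_deg (hf : S.IsWeighting U f) :
    ∑ v ∈ U, S.deg f v = ∑ i, f i * #(S.block i) := by
  simpa using hf.sum_mul_deg 1

lemma IsFracPartition.total_le_card (hf : S.IsFracPartition U f) : S.total f ≤ #U := by
  calc S.total f ≤ ∑ i, f i * #(S.block i) := sum_le_sum fun i _ => by
        rw [mul_comm]
        exact mul_le_mul_of_nonneg_left (S.cost_le_card i) (hf.nonneg i)
    _ = #U := by rw [← hf.sum_deg, sum_congr rfl hf.deg_eq_one]; simp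

lemma total_singletonWeight_le {d : E → ℝ} (hd : ∀ v ∈ U, 0 ≤ d v) :
    S.total (S.singletonWeight U d) ≤ ∑ v ∈ U, d v := by
  rw [total, sum_mul_singletonWeight]
  simp only [mem_univ, filter_true]
  refine sum_le_sum fun v hv => mul_le_of_le_one_left (hd v hv) ?_
  simpa [S.block_single] using S.cost_le_card (S.single v)

lemma IsWeighting.exists_isFracPartition_of_deg_le_one (hf : S.IsWeighting U f)
    (hdeg : ∀ v ∈ U, S.deg f v ≤ 1) :
    ∃ g, S.IsFracPartition U g ∧ (∀ u v, u ≠ v → S.codeg g u v = S.codeg f u v) ∧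
      S.total g ≤ S.total f + ∑ v ∈ U, (1 - S.deg f v) := by
  set d : E → ℝ := fun v => 1 - S.deg f v
  set e := S.singletonWeight U d with he
  have hd_nonneg : ∀ v ∈ U, 0 ≤ d v := fun v hv => sub_nonneg.2 (hdeg v hv)
  have hdeg_e : ∀ v ∈ U, S.deg e v = d v := fun v hv => by
    rw [deg, he, sum_singletonWeight]
    simp [S.block_single, filter_eq, hv]
  have hcodeg_e : ∀ u v, u ≠ v → S.codeg e u v = 0 := fun u v huv => by
    rw [codeg, he, sum_singletonWeight]
    refine sum_eq_zero fun w hw => absurd ?_ huv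
    simp only [mem_filter, mem_univ, true_and, S.block_single, mem_singleton] at hw
    exact hw.2.1.trans hw.2.2.symm
  refine ⟨f + e, ⟨⟨fun i => add_nonneg (hf.nonneg i) (sum_nonneg fun v hv =>
    hd_nonneg v (mem_filter.1 hv).1), fun i hi => ?_⟩, fun v hv => ?_⟩, fun u v huv => ?_, ?_⟩
  · rcases eq_or_ne (f i) 0 with hfi | hfi
    · rw [Pi.add_apply, hfi, zero_add] at hi
      obtain ⟨v, hv, -⟩ := exists_ne_zero_of_sum_ne_zero hi
      obtain ⟨hvU, rfl⟩ := mem_filter.1 hv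
      rw [S.block_single]
      exact singleton_subset_iff.2 hvU
    · exact hf.block_subset i hfi
  · have hadd : S.deg (f + e) v = S.deg f v + S.deg e v := sum_add_distrib
    rw [hadd, hdeg_e v hv, add_sub_cancel]
  · have hadd : S.codeg (f + e) u v = S.codeg f u v + S.codeg e u v := sum_add_distrib
    rw [hadd, hcodeg_e u v huv, add_zero]
  · have hadd : S.total (f + e) = S.total f + S.total e := by
      simp only [total, Pi.add_apply, mul_add, sum_add_distrib]
    exact hadd.trans_le (add_le_add_right (total_singletonWeight_le hd_nonneg) _)

lemma IsWeighting.exists_le_deg_le_one (hf : S.IsWeighting U f) :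
    ∃ h, S.IsWeighting U h ∧ (∀ i, h i ≤ f i) ∧ (∀ v, S.deg h v ≤ 1) ∧
      ∑ v ∈ U, (S.deg f v - S.deg h v) ≤ r * ∑ v ∈ U, |S.deg f v - 1| := by
  set φ : E → ℝ := fun v => (max 1 (S.deg f v))⁻¹ with hφ
  have hmax : ∀ v, 0 < max 1 (S.deg f v) := fun v => zero_lt_one.trans_le (le_max_left _ _)
  have hφ0 : ∀ v, 0 ≤ φ v := fun v => (inv_pos.2 (hmax v)).le
  have hφ1 : ∀ v, φ v ≤ 1 := fun v => inv_le_one_of_one_le₀ (le_max_left _ _)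
  have hprod : ∀ s : Finset E, ∏ v ∈ s, φ v ≤ 1 := fun s =>
    prod_le_one (fun v _ => hφ0 v) fun v _ => hφ1 v
  have hφdeg : ∀ v, φ v * S.deg f v ≤ 1 := fun v => by
    rw [hφ, inv_mul_le_one₀ (hmax v)]; exact le_max_right _ _
  have hφdev : ∀ v, (1 - φ v) * S.deg f v ≤ |S.deg f v - 1| := fun v => by
    rcases le_total (S.deg f v) 1 with h | h
    · simp [hφ, max_eq_left h]
    · simp only [hφ, max_eq_right h, sub_mul, one_mul, inv_mul_cancel₀ (zero_lt_one.trans_le h).ne']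
      exact le_abs_self _
  have hle : ∀ i, f i * ∏ v ∈ S.block i, φ v ≤ f i := fun i =>
    mul_le_of_le_one_right (hf.nonneg i) (hprod _)
  have hweight : S.IsWeighting U fun i => f i * ∏ v ∈ S.block i, φ v :=
    ⟨fun i => mul_nonneg (hf.nonneg i) (prod_nonneg fun v _ => hφ0 v),
      fun i hi => hf.block_subset i (left_ne_zero_of_mul hi)⟩
  refine ⟨_, hweight, hle, fun v => ?_, ?_⟩
  · refine le_trans ?_ (hφdeg v)
    rw [deg, deg, mul_sum]
    refine sum_le_sum fun i hi => ?_
    rw [mul_comm (φ v), ← mul_prod_erase _ _ (mem_filter.1 hi).2]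
    exact mul_le_mul_of_nonneg_left (mul_le_of_le_one_right (hφ0 v) (hprod _)) (hf.nonneg i)
  · calc ∑ v ∈ U, (S.deg f v - S.deg (fun i => f i * ∏ v ∈ S.block i, φ v) v)
        = ∑ i, f i * ((1 - ∏ v ∈ S.block i, φ v) * #(S.block i)) := by
          rw [sum_sub_distrib, hf.sum_deg, hweight.sum_deg, ← sum_sub_distrib]
          exact sum_congr rfl fun i _ => by ring
      _ ≤ ∑ i, f i * ((∑ v ∈ S.block i, (1 - φ v)) * r) := sum_le_sum fun i _ => by
          refine mul_le_mul_of_nonneg_left (mul_le_mul ?_ (by exact_mod_cast S.card_le i)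
            (Nat.cast_nonneg _) (sum_nonneg fun v _ => sub_nonneg.2 (hφ1 v))) (hf.nonneg i)
          exact one_sub_prod_le_sum_one_sub _ hφ0 hφ1
      _ = r * ∑ v ∈ U, (1 - φ v) * S.deg f v := by
          rw [hf.sum_mul_deg, mul_sum]
          exact sum_congr rfl fun i _ => by ring
      _ ≤ r * ∑ v ∈ U, |S.deg f v - 1| :=
          mul_le_mul_of_nonneg_left (sum_le_sum fun v _ => hφdev v) (Nat.cast_nonneg _)

lemma IsWeighting.exists_isFracPartition (hf : S.IsWeighting U f) :
    ∃ g, S.IsFracPartition U g ∧ (∀ u v, u ≠ v → S.codeg g u v ≤ S.codeg f u v) ∧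
      S.total g ≤ S.total f + (1 + r) * ∑ v ∈ U, |S.deg f v - 1| := by
  obtain ⟨h, hh, hle, hdeg, hloss⟩ := hf.exists_le_deg_le_one
  obtain ⟨g, hg, hcodeg, htotal⟩ := hh.exists_isFracPartition_of_deg_le_one fun v _ => hdeg v
  refine ⟨g, hg, fun u v huv => (hcodeg u v huv).trans_le (sum_le_sum fun i _ => hle i), ?_⟩
  have htotal_le : S.total h ≤ S.total f :=
    sum_le_sum fun i _ => mul_le_mul_of_nonneg_left (hle i) (S.cost_nonneg i)
  have hdefect : ∑ v ∈ U, (1 - S.deg h v) ≤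
      ∑ v ∈ U, |S.deg f v - 1| + ∑ v ∈ U, (S.deg f v - S.deg h v) := by
    rw [← sum_add_distrib]
    exact sum_le_sum fun v _ => by linarith [neg_abs_le (S.deg f v - 1)]
  linarith

lemma exists_isWeighting_abs_deg_sub_one_le [Finite E] {τ : ℝ}
    (hdual : ∀ (w : E → ℝ) (l : ℝ), 0 ≤ l →
      (∀ i, S.block i ⊆ U → ∑ v ∈ S.block i, w v ≤ l * S.cost i) → ∑ v ∈ U, w v ≤ l * τ)
    {κ : ℝ} (hκ : 0 < κ) :
    ∃ f, S.IsWeighting U f ∧ (∀ v ∈ U, |S.deg f v - 1| ≤ κ) ∧ S.total f ≤ τ + κ := by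
  cases nonempty_fintype E
  let ind : Finset E → E → ℝ := fun A v => if v ∈ A then 1 else 0
  let a : Option ι → (E → ℝ) × ℝ := fun o => o.elim (0, 1) fun i =>
    if S.block i ⊆ U then (ind (S.block i), S.cost i) else 0
  have hφ : ∀ (φ : StrongDual ℝ ((E → ℝ) × ℝ)) (A : Finset E) (t : ℝ),
      φ (ind A, t) = ∑ v ∈ A, φ (Pi.single v 1, 0) + t * φ (0, 1) := fun φ A t => by
    have hsplit : (ind A, t) = ∑ v ∈ A, ((Pi.single v 1, 0) : (E → ℝ) × ℝ) + t • (0, 1) := by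
      ext v
      · simp [ind, Prod.fst_sum, Finset.sum_apply, Pi.single_apply]
      · simp [Prod.snd_sum]
    rw [hsplit, map_add, map_sum, map_smul, smul_eq_mul]
  obtain ⟨g, hg, hgκ⟩ := exists_nonneg_norm_sum_smul_sub_lt a (ind U, τ) (fun φ hφa => by
    have h := hdual (fun v => -φ (Pi.single v 1, 0)) (φ (0, 1)) (hφa none) fun i hi => by
      have hai : a (some i) = (ind (S.block i), S.cost i) := if_pos hi
      have := hφa (some i)
      rw [hai, hφ] at this
      rw [sum_neg_distrib]; linarith
    rw [sum_neg_distrib] at h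
    rw [hφ]; linarith) hκ
  set f : ι → ℝ := fun i => if S.block i ⊆ U then g (some i) else 0 with hf
  have hsum : ∑ o, g o • a o = (S.deg f, S.total f + g none) := by
    have hsmul : ∀ i, g (some i) • a (some i) = f i • (ind (S.block i), S.cost i) := fun i => by
      simp only [a, hf, Option.elim_some]; split_ifs <;> simp
    rw [Fintype.sum_option, sum_congr rfl fun i _ => hsmul i]
    ext v
    · simp [a, ind, deg, sum_filter, Prod.fst_sum, Finset.sum_apply]
    · simp [a, total, Prod.snd_sum, mul_comm (f _), add_comm]
  rw [hsum, Prod.mk_sub_mk, Prod.norm_mk, max_lt_iff] at hgκ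
  refine ⟨f, ⟨fun i => ?_, fun i hi => ?_⟩, fun v hv => ?_, ?_⟩
  · rw [hf]; dsimp only; split_ifs; exacts [hg _, le_rfl]
  · exact (ite_ne_right_iff.1 hi).1
  · have := (norm_le_pi_norm (S.deg f - ind U) v).trans hgκ.1.le
    simpa [ind, hv] using this
  · linarith [(le_abs_self _).trans hgκ.2.le, hg none]

lemma exists_isFracPartition_of_dual [Finite E] {τ : ℝ}
    (hdual : ∀ (w : E → ℝ) (l : ℝ), 0 ≤ l →
      (∀ i, S.block i ⊆ U → ∑ v ∈ S.block i, w v ≤ l * S.cost i) → ∑ v ∈ U, w v ≤ l * τ)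
    {η : ℝ} (hη : 0 < η) : ∃ f, S.IsFracPartition U f ∧ S.total f ≤ τ + η := by
  have hden : (0 : ℝ) < 1 + (1 + r) * #U := by positivity
  set κ : ℝ := η / (1 + (1 + r) * #U) with hκ
  obtain ⟨f, hf, hdeg, htotal⟩ := exists_isWeighting_abs_deg_sub_one_le hdual (div_pos hη hden)
  obtain ⟨g, hg, -, hgf⟩ := hf.exists_isFracPartition
  refine ⟨g, hg, hgf.trans ?_⟩
  have hdev : ∑ v ∈ U, |S.deg f v - 1| ≤ #U * κ := by
    rw [← nsmul_eq_mul]; exact sum_le_card_nsmul _ _ _ hdeg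
  calc S.total f + (1 + r) * ∑ v ∈ U, |S.deg f v - 1|
      ≤ τ + κ + (1 + r) * (#U * κ) := by gcongr
    _ = τ + κ * (1 + (1 + r) * #U) := by ring
    _ = τ + η := by rw [hκ, div_mul_cancel₀ _ hden.ne']

end PartitionSystem

section RandomSubset

variable {ι : Type*} [Fintype ι] {q : ι → ℝ}

/-- The probability that the random subset of `ι` that contains each `i` independently with
probability `q i` equals `R`. -/
noncomputable def subsetProb (q : ι → ℝ) (R : Finset ι) : ℝ := (∏ i ∈ R, q i) * ∏ i ∈ Rᶜ, (1 - q i)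

/-- The expectation of `g R` for the random subset `R` of `ι` that contains each `i` independently
with probability `q i`. -/
noncomputable def subsetExpect (q : ι → ℝ) (g : Finset ι → ℝ) : ℝ := ∑ R, subsetProb q R * g R

lemma subsetProb_nonneg (hq0 : ∀ i, 0 ≤ q i) (hq1 : ∀ i, q i ≤ 1) (R : Finset ι) :
    0 ≤ subsetProb q R :=
  mul_nonneg (prod_nonneg fun i _ => hq0 i) (prod_nonneg fun i _ => sub_nonneg.2 (hq1 i))

lemma subsetExpect_add (g h : Finset ι → ℝ) :
    subsetExpect q (fun R => g R + h R) = subsetExpect q g + subsetExpect q h := by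
  simp only [subsetExpect, mul_add, sum_add_distrib]

lemma subsetExpect_const_mul (c : ℝ) (g : Finset ι → ℝ) :
    subsetExpect q (fun R => c * g R) = c * subsetExpect q g := by
  simp only [subsetExpect, mul_sum, mul_left_comm]

lemma subsetExpect_sum {α : Type*} (s : Finset α) (g : α → Finset ι → ℝ) :
    subsetExpect q (fun R => ∑ a ∈ s, g a R) = ∑ a ∈ s, subsetExpect q (g a) := by
  simp only [subsetExpect, mul_sum]
  exact sum_comm

lemma subsetExpect_mono (hq0 : ∀ i, 0 ≤ q i) (hq1 : ∀ i, q i ≤ 1) {g h : Finset ι → ℝ}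
    (hgh : ∀ R, g R ≤ h R) : subsetExpect q g ≤ subsetExpect q h :=
  sum_le_sum fun R _ => mul_le_mul_of_nonneg_left (hgh R) (subsetProb_nonneg hq0 hq1 R)

lemma subsetExpect_prod_mul_prod (a b : ι → ℝ) :
    subsetExpect q (fun R => (∏ i ∈ R, a i) * ∏ i ∈ Rᶜ, b i) =
      ∏ i, (q i * a i + (1 - q i) * b i) := by
  rw [prod_add, powerset_univ, subsetExpect]
  refine sum_congr rfl fun R _ => ?_
  rw [← compl_eq_univ_sdiff, prod_mul_distrib, prod_mul_distrib, subsetProb]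
  ring

lemma subsetExpect_const (c : ℝ) : subsetExpect q (fun _ => c) = c := by
  have h := subsetExpect_prod_mul_prod (q := q) 1 1
  have hc := subsetExpect_const_mul (q := q) c 1
  simp only [Pi.one_apply, prod_const_one, mul_one, add_sub_cancel] at h hc
  rw [hc]
  exact (congrArg (c * ·) h).trans (mul_one c)

lemma subsetExpect_subset (A : Finset ι) :
    subsetExpect q (fun R => if A ⊆ R then 1 else 0) = ∏ i ∈ A, q i := by
  have h := subsetExpect_prod_mul_prod (q := q) 1 fun i => if i ∉ A then 1 else 0
  have hiff : ∀ R : Finset ι, (∀ i ∈ Rᶜ, i ∉ A) ↔ A ⊆ R := fun R => by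
    simp only [mem_compl, not_imp_not, subset_iff]
  simp only [Pi.one_apply, prod_const_one, one_mul, mul_one, prod_ite_zero, hiff] at h
  rw [h, ← prod_subset (subset_univ A) fun i _ hi => by simp [hi]]
  exact prod_congr rfl fun i hi => by simp [hi]

lemma subsetExpect_disjoint (B : Finset ι) :
    subsetExpect q (fun R => if Disjoint B R then 1 else 0) = ∏ i ∈ B, (1 - q i) := by
  have h := subsetExpect_prod_mul_prod (q := q) (fun i => if i ∉ B then 1 else 0) 1
  simp only [Pi.one_apply, prod_const_one, mul_one, prod_ite_zero, ← disjoint_right] at h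
  rw [h, ← prod_subset (subset_univ B) fun i _ hi => by simp [hi]]
  exact prod_congr rfl fun i hi => by simp [hi]

lemma exists_le_of_subsetExpect_le (hq0 : ∀ i, 0 ≤ q i) (hq1 : ∀ i, q i ≤ 1) {g : Finset ι → ℝ}
    {t : ℝ} (h : subsetExpect q g ≤ t) : ∃ R, (∀ i ∈ R, q i ≠ 0) ∧ g R ≤ t := by
  by_contra! hlt
  have hne : ∀ R, subsetProb q R ≠ 0 → ∀ i ∈ R, q i ≠ 0 := fun R hR =>
    prod_ne_zero_iff.1 (left_ne_zero_of_mul hR)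
  obtain ⟨R, hR⟩ : ∃ R, subsetProb q R ≠ 0 := by
    by_contra! hzero
    simpa [subsetExpect, hzero] using subsetExpect_const (q := q) 1
  have hsum : subsetExpect q (fun _ => t) < subsetExpect q g := by
    refine sum_lt_sum (fun R _ => ?_) ⟨R, mem_univ R, ?_⟩
    · rcases eq_or_ne (subsetProb q R) 0 with h0 | h0
      · rw [h0, zero_mul, zero_mul]
      · exact mul_le_mul_of_nonneg_left (hlt R (hne R h0)).le (subsetProb_nonneg hq0 hq1 R)
    · exact mul_lt_mul_of_pos_left (hlt R (hne R hR))
        ((subsetProb_nonneg hq0 hq1 R).lt_of_ne' hR)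
  rw [subsetExpect_const] at hsum
  exact hsum.not_ge h

end RandomSubset

lemma exp_mul_sub_two_le {p : ℝ} (hp : 0 ≤ p) {k r : ℕ} (hk : 1 ≤ k) (hkr : k ≤ r) :
    Real.exp (p * (k - 2)) ≤ Real.exp (-p) + Real.exp (p * r) * (k - 1) := by
  rcases hk.eq_or_lt with rfl | hk
  · norm_num
  · have hk' : (1 : ℝ) ≤ k - 1 := by
      have : (2 : ℝ) ≤ k := by exact_mod_cast hk
      linarith
    have hle : Real.exp (p * (k - 2)) ≤ Real.exp (p * r) := by
      have : (k : ℝ) ≤ r := by exact_mod_cast hkr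
      gcongr; linarith
    calc Real.exp (p * (k - 2)) ≤ Real.exp (p * r) * (k - 1) :=
          hle.trans (le_mul_of_one_le_right (Real.exp_pos _).le hk')
      _ ≤ _ := le_add_of_nonneg_left (Real.exp_pos _).le

lemma subsetExpect_sum_mem {ι : Type*} [Fintype ι] {q : ι → ℝ} (a : ι → ℝ) :
    subsetExpect q (fun R => ∑ i ∈ R, a i) = ∑ i, a i * q i := by
  have hsum : ∀ R : Finset ι, ∑ i ∈ R, a i = ∑ i, a i * if {i} ⊆ R then 1 else 0 := fun R => by
    simp
  simp only [hsum, subsetExpect_sum, subsetExpect_const_mul, subsetExpect_subset, prod_singleton]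

section Nibble

variable {ι : Type*} {p : ℝ} {f : ι → ℝ}

/-- The probability with which the nibble selects each block; replacing `p * f i` by
`1 - exp (-(p * f i))` makes the probability of avoiding a set of blocks exactly exponential. -/
noncomputable def nibbleProb (p : ℝ) (f : ι → ℝ) (i : ι) : ℝ := 1 - Real.exp (-(p * f i))

lemma nibbleProb_nonneg (hp : 0 ≤ p) (hf : ∀ i, 0 ≤ f i) (i : ι) : 0 ≤ nibbleProb p f i :=
  sub_nonneg.2 (Real.exp_le_one_iff.2 (neg_nonpos.2 (mul_nonneg hp (hf i))))

lemma nibbleProb_le_one (i : ι) : nibbleProb p f i ≤ 1 :=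
  sub_le_self _ (Real.exp_pos _).le

lemma nibbleProb_le (i : ι) : nibbleProb p f i ≤ p * f i := by
  rw [nibbleProb]; linarith [Real.add_one_le_exp (-(p * f i))]

lemma nibbleProb_eq_zero {i : ι} (hi : f i = 0) : nibbleProb p f i = 0 := by
  simp [nibbleProb, hi]

end Nibble

namespace PartitionSystem

section Partition

variable {E ι : Type*} {r : ℕ} {S : PartitionSystem E ι r} {U : Finset E}

lemma HasPartition.mono {κ κ' : ℝ} (h : S.HasPartition U κ) (hκ : κ ≤ κ') :
    S.HasPartition U κ' :=
  h.imp fun _ hM => ⟨hM.1, hM.2.1, hM.2.2.trans hκ⟩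

lemma HasPartition.union {U₁ U₂ : Finset E} {κ₁ κ₂ : ℝ} (hU : Disjoint U₁ U₂)
    (h₁ : S.HasPartition U₁ κ₁) (h₂ : S.HasPartition U₂ κ₂) :
    S.HasPartition (U₁ ∪ U₂) (κ₁ + κ₂) := by
  obtain ⟨M₁, hdisj₁, rfl, hcost₁⟩ := h₁
  obtain ⟨M₂, hdisj₂, rfl, hcost₂⟩ := h₂
  have hcross : ∀ i ∈ M₁, ∀ j ∈ M₂, Disjoint (S.block i) (S.block j) := fun i hi j hj =>
    disjoint_of_subset_left (subset_biUnion_of_mem S.block hi)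
      (disjoint_of_subset_right (subset_biUnion_of_mem S.block hj) hU)
  refine ⟨M₁ ∪ M₂, ?_, union_biUnion, ?_⟩
  · rw [coe_union]
    exact hdisj₁.union hdisj₂ fun i hi j hj _ => hcross i hi j hj
  · have hinter : 0 ≤ ∑ i ∈ M₁ ∩ M₂, S.cost i := sum_nonneg fun i _ => S.cost_nonneg i
    linarith [sum_union_inter (s₁ := M₁) (s₂ := M₂) (f := S.cost)]

lemma hasPartition_card (U : Finset E) : S.HasPartition U #U := by
  have hinj : Function.Injective S.single := fun u v h => by
    simpa [S.block_single] using congrArg S.block h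
  refine ⟨U.map ⟨S.single, hinj⟩, ?_, ?_, ?_⟩
  · simpa [Set.PairwiseDisjoint, hinj.injOn.pairwise_image, Function.onFun, S.block_single,
      Set.Pairwise] using fun u _ v _ huv h => huv (h ▸ rfl)
  · ext v; simp [S.block_single]
  · rw [sum_map, ← nsmul_one]
    refine sum_le_card_nsmul _ _ _ fun v _ => ?_
    simpa [S.block_single] using S.cost_le_card (S.single v)

end Partition

variable {E ι : Type*} {r : ℕ} (S : PartitionSystem E ι r)

/-- The indicator of the event that no block of `R` meets `W`. -/
noncomputable def free (R : Finset ι) (W : Finset E) : ℝ :=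
  if Disjoint (R.biUnion S.block) W then 1 else 0

lemma free_nonneg (R : Finset ι) (W : Finset E) : 0 ≤ S.free R W := by
  unfold free; split_ifs <;> norm_num

lemma free_le_one (R : Finset ι) (W : Finset E) : S.free R W ≤ 1 := by
  unfold free; split_ifs <;> norm_num

lemma free_union (R : Finset ι) (W W' : Finset E) :
    S.free R (W ∪ W') = S.free R W * S.free R W' := by
  simp only [free, disjoint_union_right, ite_and, ite_mul, one_mul, zero_mul]

lemma sum_sdiff_biUnion_block (U : Finset E) (R : Finset ι) (g : E → ℝ) :
    ∑ v ∈ U \ R.biUnion S.block, g v = ∑ v ∈ U, S.free R {v} * g v := by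
  simp only [free, disjoint_singleton_right, ite_mul, one_mul, zero_mul, ← sum_filter,
    sdiff_eq_filter]

/-- The weighting left after removing the points covered by `R`. The exponential factor
compensates the probability that a block loses none of its points, given that one fixed point of it
survives. -/
noncomputable def residual (p : ℝ) (f : ι → ℝ) (R : Finset ι) (i : ι) : ℝ :=
  f i * Real.exp (p * (#(S.block i) - 1)) * S.free R (S.block i)

variable {S} {U : Finset E} {f : ι → ℝ} {p δ : ℝ}

lemma IsWeighting.residual (hf : S.IsWeighting U f) (R : Finset ι) :
    S.IsWeighting (U \ R.biUnion S.block) (S.residual p f R) := by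
  refine ⟨fun i => mul_nonneg (mul_nonneg (hf.nonneg i) (Real.exp_pos _).le) (S.free_nonneg _ _),
    fun i hi => subset_sdiff.2 ⟨?_, ?_⟩⟩
  · exact hf.block_subset i (left_ne_zero_of_mul (left_ne_zero_of_mul hi))
  · exact (ite_ne_right_iff.1 (right_ne_zero_of_mul hi)).1.symm

lemma IsWeighting.residual_le (hf : S.IsWeighting U f) (hp : 0 ≤ p) (R : Finset ι) (i : ι) :
    S.residual p f R i ≤ Real.exp (p * r) * f i := by
  have hcard : (#(S.block i) : ℝ) ≤ r := by exact_mod_cast S.card_le i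
  calc S.residual p f R i ≤ f i * Real.exp (p * (#(S.block i) - 1)) :=
        mul_le_of_le_one_right (mul_nonneg (hf.nonneg i) (Real.exp_pos _).le) (S.free_le_one _ _)
    _ ≤ f i * Real.exp (p * r) := by
        have := hf.nonneg i
        gcongr
        linarith
    _ = _ := mul_comm _ _

variable (S) [Fintype ι]

/-- The total weight of the blocks meeting `W`. -/
noncomputable def meet (f : ι → ℝ) (W : Finset E) : ℝ := ∑ i with ¬Disjoint (S.block i) W, f i

/-- The sum of `#(S.block i)` over all ordered pairs of distinct intersecting blocks `i, j`
of `R`. -/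
noncomputable def conflictCost (R : Finset ι) : ℝ :=
  ∑ i, ∑ j with j ≠ i ∧ ¬Disjoint (S.block j) (S.block i),
    #(S.block i) * if {i, j} ⊆ R then 1 else 0

variable {S}

lemma HasPartition.of_sdiff_biUnion {R : Finset ι} (hRU : ∀ i ∈ R, S.block i ⊆ U) {κ : ℝ}
    (h : S.HasPartition (U \ R.biUnion S.block) κ) :
    S.HasPartition U (∑ i ∈ R, S.cost i + S.conflictCost R + κ) := by
  set M := {i ∈ R | ∀ j ∈ R, i ≠ j → Disjoint (S.block i) (S.block j)} with hM
  have hMR : M ⊆ R := filter_subset _ _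
  have hkept : S.HasPartition (M.biUnion S.block) (∑ i ∈ M, S.cost i) :=
    ⟨M, fun i hi j hj hij => (mem_filter.1 hi).2 j (hMR hj) hij, rfl, le_rfl⟩
  have hcover := hkept.union disjoint_sdiff
    (hasPartition_card (R.biUnion S.block \ M.biUnion S.block))
  rw [union_sdiff_of_subset (biUnion_subset_biUnion_of_subset_left _ hMR)] at hcover
  have hall := hcover.union disjoint_sdiff h
  rw [union_sdiff_of_subset (biUnion_subset.2 hRU)] at hall
  refine hall.mono (add_le_add_left (add_le_add ?_ ?_) _)
  · exact sum_le_sum_of_subset_of_nonneg hMR fun i _ _ => S.cost_nonneg i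
  have hsub : R.biUnion S.block \ M.biUnion S.block ⊆ (R \ M).biUnion S.block := fun v hv => by
    simp only [mem_sdiff, mem_biUnion] at hv ⊢
    obtain ⟨⟨i, hi, hvi⟩, hv⟩ := hv
    exact ⟨i, ⟨hi, fun hiM => hv ⟨i, hiM, hvi⟩⟩, hvi⟩
  have hterm : ∀ i j, (0 : ℝ) ≤ #(S.block i) * if {i, j} ⊆ R then 1 else 0 := fun i j => by
    positivity
  calc (#(R.biUnion S.block \ M.biUnion S.block) : ℝ) ≤ ∑ i ∈ R \ M, (#(S.block i) : ℝ) := by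
        exact_mod_cast (card_le_card hsub).trans card_biUnion_le
    _ ≤ ∑ i ∈ R \ M, ∑ j with j ≠ i ∧ ¬Disjoint (S.block j) (S.block i),
          #(S.block i) * (if {i, j} ⊆ R then 1 else 0 : ℝ) := sum_le_sum fun i hi => by
        obtain ⟨hiR, hiM⟩ := mem_sdiff.1 hi
        obtain ⟨j, hjR, hij, hmeet⟩ : ∃ j ∈ R, i ≠ j ∧ ¬Disjoint (S.block i) (S.block j) := by
          by_contra! hc
          exact hiM (mem_filter.2 ⟨hiR, hc⟩)
        refine le_trans ?_ (single_le_sum (fun j _ => hterm i j)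
          (mem_filter.2 ⟨mem_univ j, hij.symm, fun hd => hmeet hd.symm⟩))
        simp [insert_subset_iff, hiR, hjR]
    _ ≤ S.conflictCost R := sum_le_sum_of_subset_of_nonneg (subset_univ _) fun i _ _ =>
        sum_nonneg fun j _ => hterm i j

lemma subsetExpect_free (W : Finset E) :
    subsetExpect (nibbleProb p f) (fun R => S.free R W) = Real.exp (-(p * S.meet f W)) := by
  have h := subsetExpect_disjoint (q := nibbleProb p f) {i | ¬Disjoint (S.block i) W}
  simp only [nibbleProb, sub_sub_cancel, ← Real.exp_sum, sum_neg_distrib, ← mul_sum] at h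
  rw [meet, ← h]
  congr 1
  ext R
  refine if_congr ?_ rfl rfl
  rw [disjoint_biUnion_left, disjoint_right]
  simp only [mem_filter, mem_univ, true_and, not_not]

lemma IsFracPartition.sum_card_inter (hf : S.IsFracPartition U f) {W : Finset E} (hW : W ⊆ U) :
    ∑ i, f i * #(S.block i ∩ W) = #W := by
  have h := hf.sum_mul_deg fun v => if v ∈ W then 1 else 0
  simp only [ite_mul, one_mul, zero_mul, sum_ite_mem, inter_eq_right.2 hW, sum_const, nsmul_eq_mul,
    mul_one] at h
  rw [← h, sum_congr rfl fun v hv => hf.deg_eq_one v (hW hv), sum_const, nsmul_eq_mul, mul_one]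

lemma IsFracPartition.meet_le (hf : S.IsFracPartition U f) {W : Finset E} (hW : W ⊆ U) :
    S.meet f W ≤ #W := by
  rw [← hf.sum_card_inter hW, meet, sum_filter]
  refine sum_le_sum fun i _ => ?_
  split_ifs with h
  · exact mul_nonneg (hf.nonneg i) (Nat.cast_nonneg _)
  · rw [not_disjoint_iff_nonempty_inter] at h
    exact le_mul_of_one_le_right (hf.nonneg i) (by exact_mod_cast h.card_pos)

lemma sum_offDiag_codeg (W : Finset E) :
    ∑ z ∈ W.offDiag, S.codeg f z.1 z.2 = ∑ i, f i * #(S.block i ∩ W).offDiag := by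
  simp only [codeg]
  rw [sum_comm' (t' := univ) (s' := fun i => (S.block i ∩ W).offDiag)
    fun z i => by simp only [mem_filter, mem_offDiag, mem_inter, mem_univ]; tauto]
  simp only [sum_const, nsmul_eq_mul, mul_comm]

lemma IsFracPartition.le_meet (hf : S.IsFracPartition U f) (hδ : 0 ≤ δ)
    (hcodeg : ∀ u v, u ≠ v → S.codeg f u v ≤ δ) {W : Finset E} (hW : W ⊆ U) :
    (#W : ℝ) - #W ^ 2 * δ ≤ S.meet f W := by
  have hpairs : ∑ i, f i * #(S.block i ∩ W).offDiag ≤ (#W : ℝ) ^ 2 * δ := by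
    rw [← sum_offDiag_codeg, sq, ← Nat.cast_mul]
    refine (sum_le_card_nsmul _ _ δ fun z hz => hcodeg _ _ (mem_offDiag.1 hz).2.2).trans ?_
    rw [nsmul_eq_mul, offDiag_card]
    gcongr
    exact Nat.sub_le _ _
  have hcard : ∀ s : Finset E, (#s : ℝ) ≤ 1 + #s.offDiag := fun s => by
    rw [offDiag_card, Nat.cast_sub (Nat.le_mul_self _), Nat.cast_mul]
    linarith [mul_self_nonneg ((#s : ℝ) - 1)]
  have hinter : ∑ i, f i * #(S.block i ∩ W) ≤
      S.meet f W + ∑ i, f i * #(S.block i ∩ W).offDiag := by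
    rw [meet, sum_filter, ← sum_add_distrib]
    refine sum_le_sum fun i _ => ?_
    split_ifs with h
    · simp [disjoint_iff_inter_eq_empty.1 h]
    · linarith [mul_le_mul_of_nonneg_left (hcard (S.block i ∩ W)) (hf.nonneg i)]
  rw [hf.sum_card_inter hW] at hinter
  linarith

lemma IsFracPartition.subsetExpect_free_le (hf : S.IsFracPartition U f) (hδ : 0 ≤ δ)
    (hcodeg : ∀ u v, u ≠ v → S.codeg f u v ≤ δ) (hp : 0 ≤ p) {W : Finset E} (hW : W ⊆ U) :
    subsetExpect (nibbleProb p f) (fun R => S.free R W) ≤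
      Real.exp (-(p * #W) + p * (#W ^ 2 * δ)) := by
  rw [subsetExpect_free, Real.exp_le_exp]
  linarith [mul_le_mul_of_nonneg_left (hf.le_meet hδ hcodeg hW) hp]

lemma IsFracPartition.le_subsetExpect_free (hf : S.IsFracPartition U f) (hp : 0 ≤ p)
    {W : Finset E} (hW : W ⊆ U) :
    Real.exp (-(p * #W)) ≤ subsetExpect (nibbleProb p f) (fun R => S.free R W) := by
  rw [subsetExpect_free, Real.exp_le_exp]
  exact neg_le_neg (mul_le_mul_of_nonneg_left (hf.meet_le hW) hp)

lemma IsFracPartition.subsetExpect_free_singleton (hf : S.IsFracPartition U f) {v : E}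
    (hv : v ∈ U) : subsetExpect (nibbleProb p f) (fun R => S.free R {v}) = Real.exp (-p) := by
  have hmeet : S.meet f {v} = S.deg f v := by simp [meet, deg]
  rw [subsetExpect_free, hmeet, hf.deg_eq_one v hv, mul_one]

lemma IsWeighting.codeg_residual_le (hf : S.IsWeighting U f) (hp : 0 ≤ p) (R : Finset ι) (u v : E) :
    S.codeg (S.residual p f R) u v ≤ Real.exp (p * r) * S.codeg f u v := by
  rw [codeg, codeg, mul_sum]
  exact sum_le_sum fun i _ => hf.residual_le hp R i

lemma deg_residual_eq_zero {R : Finset ι} {v : E} (hv : S.free R {v} = 0) :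
    S.deg (S.residual p f R) v = 0 := by
  refine sum_eq_zero fun i hi => ?_
  rw [PartitionSystem.residual, ← insert_eq_of_mem (mem_filter.1 hi).2, insert_eq, free_union, hv,
    zero_mul, mul_zero]

end PartitionSystem

namespace PartitionSystem

variable {E ι : Type*} [Fintype ι] {r : ℕ} {S : PartitionSystem E ι r} {U : Finset E} {f : ι → ℝ}
  {p δ : ℝ}

lemma IsFracPartition.subsetExpect_total_residual_le (hf : S.IsFracPartition U f) (hδ : 0 ≤ δ)
    (hcodeg : ∀ u v, u ≠ v → S.codeg f u v ≤ δ) (hp : 0 ≤ p) :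
    subsetExpect (nibbleProb p f) (fun R => S.total (S.residual p f R)) ≤
      Real.exp (p * (r ^ 2 * δ)) * Real.exp (-p) * S.total f := by
  simp only [total, residual, subsetExpect_sum, subsetExpect_const_mul, mul_sum]
  refine sum_le_sum fun i _ => ?_
  rcases eq_or_ne (f i) 0 with hi | hi
  · simp [hi]
  have hcard : (#(S.block i) : ℝ) ≤ r := by exact_mod_cast S.card_le i
  have hsurvive : Real.exp (p * (#(S.block i) - 1)) *
      subsetExpect (nibbleProb p f) (fun R => S.free R (S.block i)) ≤
      Real.exp (p * (r ^ 2 * δ)) * Real.exp (-p) := by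
    calc _ ≤ Real.exp (p * (#(S.block i) - 1)) *
          Real.exp (-(p * #(S.block i)) + p * (#(S.block i) ^ 2 * δ)) :=
          mul_le_mul_of_nonneg_left
            (hf.subsetExpect_free_le hδ hcodeg hp (hf.block_subset i hi)) (Real.exp_pos _).le
      _ = Real.exp (p * (#(S.block i) ^ 2 * δ)) * Real.exp (-p) := by
          rw [← Real.exp_add, ← Real.exp_add]; ring_nf
      _ ≤ _ := by gcongr
  calc S.cost i * (f i * Real.exp (p * (#(S.block i) - 1)) *
        subsetExpect (nibbleProb p f) (fun R => S.free R (S.block i)))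
      = S.cost i * f i * (Real.exp (p * (#(S.block i) - 1)) *
        subsetExpect (nibbleProb p f) (fun R => S.free R (S.block i))) := by ring
    _ ≤ S.cost i * f i * (Real.exp (p * (r ^ 2 * δ)) * Real.exp (-p)) :=
        mul_le_mul_of_nonneg_left hsurvive (mul_nonneg (S.cost_nonneg i) (hf.nonneg i))
    _ = _ := by ring

lemma IsFracPartition.le_subsetExpect_deg_residual (hf : S.IsFracPartition U f) (hp : 0 ≤ p)
    {v : E} (hv : v ∈ U) :
    Real.exp (-p) ≤
      subsetExpect (nibbleProb p f) (fun R => S.deg (S.residual p f R) v) := by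
  rw [← mul_one (Real.exp (-p)), ← hf.deg_eq_one v hv]
  simp only [deg, residual, subsetExpect_sum, subsetExpect_const_mul, mul_sum]
  refine sum_le_sum fun i _ => ?_
  rcases eq_or_ne (f i) 0 with hi | hi
  · simp [hi]
  calc Real.exp (-p) * f i
      = f i * Real.exp (p * (#(S.block i) - 1)) * Real.exp (-(p * #(S.block i))) := by
        rw [mul_assoc, ← Real.exp_add]; ring_nf
    _ ≤ _ := mul_le_mul_of_nonneg_left (hf.le_subsetExpect_free hp (hf.block_subset i hi))
        (mul_nonneg (hf.nonneg i) (Real.exp_pos _).le)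

lemma IsFracPartition.subsetExpect_residual_mul_residual_le (hf : S.IsFracPartition U f)
    (hδ : 0 ≤ δ) (hcodeg : ∀ u v, u ≠ v → S.codeg f u v ≤ δ) (hp : 0 ≤ p) (i j : ι) :
    subsetExpect (nibbleProb p f) (fun R => S.residual p f R i * S.residual p f R j) ≤
      Real.exp (p * (4 * r ^ 2 * δ)) *
        (f i * (f j * Real.exp (p * (#(S.block i ∩ S.block j) - 2)))) := by
  rcases eq_or_ne (f i) 0 with hi | hi
  · simp [residual, hi, subsetExpect_const]
  rcases eq_or_ne (f j) 0 with hj | hj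
  · simp [residual, hj, subsetExpect_const]
  set a := Real.exp (p * (#(S.block i) - 1)) * Real.exp (p * (#(S.block j) - 1)) with ha
  set k : ℝ := ((#(S.block i ∪ S.block j) : ℕ) : ℝ) with hk
  have hexpand : ∀ R, S.residual p f R i * S.residual p f R j =
      f i * f j * a * S.free R (S.block i ∪ S.block j) := fun R => by
    rw [free_union, residual, residual, ha]; ring
  have hunion : k + #(S.block i ∩ S.block j) = #(S.block i) + #(S.block j) := by
    rw [hk]; exact_mod_cast card_union_add_card_inter _ _
  have hk_le : k ≤ 2 * r := by
    rw [hk]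
    exact_mod_cast (card_union_le _ _).trans (by linarith [S.card_le i, S.card_le j])
  have hexp : a * Real.exp (-(p * k) + p * (k ^ 2 * δ)) =
      Real.exp (p * (k ^ 2 * δ)) * Real.exp (p * (#(S.block i ∩ S.block j) - 2)) := by
    rw [ha, ← Real.exp_add, ← Real.exp_add, ← Real.exp_add, eq_sub_of_add_eq' hunion]
    ring_nf
  have hk_sq : k ^ 2 ≤ 4 * r ^ 2 := by nlinarith [Nat.cast_nonneg (α := ℝ) #(S.block i ∪ S.block j)]
  have hfij : 0 ≤ f i * f j := mul_nonneg (hf.nonneg i) (hf.nonneg j)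
  simp only [hexpand, subsetExpect_const_mul]
  calc _ ≤ f i * f j * a * Real.exp (-(p * k) + p * (k ^ 2 * δ)) :=
        mul_le_mul_of_nonneg_left (hf.subsetExpect_free_le hδ hcodeg hp
          (union_subset (hf.block_subset i hi) (hf.block_subset j hj))) (by positivity)
    _ = Real.exp (p * (k ^ 2 * δ)) *
        (f i * f j * Real.exp (p * (#(S.block i ∩ S.block j) - 2))) := by
        rw [mul_assoc, hexp]; ring
    _ ≤ Real.exp (p * (4 * r ^ 2 * δ)) *
        (f i * f j * Real.exp (p * (#(S.block i ∩ S.block j) - 2))) := by gcongr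
    _ = _ := by ring

lemma sum_mul_card_inter_sub_one_le (hδ : 0 ≤ δ) (hcodeg : ∀ u v, u ≠ v → S.codeg f u v ≤ δ)
    {i : ι} {v : E} (hv : v ∈ S.block i) :
    ∑ j with v ∈ S.block j, f j * (#(S.block i ∩ S.block j) - 1) ≤ r * δ := by
  have hcard : ∀ j, v ∈ S.block j →
      (#(S.block i ∩ S.block j) : ℝ) - 1 = #{u ∈ (S.block i).erase v | u ∈ S.block j} :=
    fun j hj => by
      rw [filter_mem_eq_inter, erase_inter, cast_card_erase_of_mem (mem_inter.2 ⟨hv, hj⟩)]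
  calc ∑ j with v ∈ S.block j, f j * (#(S.block i ∩ S.block j) - 1)
      = ∑ j with v ∈ S.block j, ∑ u ∈ (S.block i).erase v with u ∈ S.block j, f j :=
        sum_congr rfl fun j hj => by
          rw [hcard j (mem_filter.1 hj).2, sum_const, nsmul_eq_mul, mul_comm]
    _ = ∑ u ∈ (S.block i).erase v, S.codeg f u v :=
        sum_comm' fun j u => by simp only [mem_filter, mem_univ, true_and]; tauto
    _ ≤ #((S.block i).erase v) • δ :=
        sum_le_card_nsmul _ _ _ fun u hu => hcodeg u v (ne_of_mem_erase hu)
    _ ≤ r * δ := by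
        rw [nsmul_eq_mul]
        gcongr
        exact (card_erase_le).trans (S.card_le i)

lemma IsFracPartition.subsetExpect_deg_residual_sq_le (hf : S.IsFracPartition U f) (hδ : 0 ≤ δ)
    (hcodeg : ∀ u v, u ≠ v → S.codeg f u v ≤ δ) (hp : 0 ≤ p) {v : E} (hv : v ∈ U) :
    subsetExpect (nibbleProb p f) (fun R => S.deg (S.residual p f R) v ^ 2) ≤
      Real.exp (p * (4 * r ^ 2 * δ)) * (Real.exp (-p) + Real.exp (p * r) * (r * δ)) := by
  set L := Real.exp (p * (4 * r ^ 2 * δ))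
  set A := Real.exp (-p) + Real.exp (p * r) * (r * δ) with hA
  have hrow : ∀ i ∈ ({i | v ∈ S.block i} : Finset ι),
      ∑ j with v ∈ S.block j, f j * Real.exp (p * (#(S.block i ∩ S.block j) - 2)) ≤ A :=
    fun i hi => by
      have hvi := (mem_filter.1 hi).2
      calc _ ≤ ∑ j with v ∈ S.block j,
            f j * (Real.exp (-p) + Real.exp (p * r) * (#(S.block i ∩ S.block j) - 1)) :=
            sum_le_sum fun j hj => mul_le_mul_of_nonneg_left (exp_mul_sub_two_le hp
              (card_pos.2 ⟨v, mem_inter.2 ⟨hvi, (mem_filter.1 hj).2⟩⟩)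
              ((card_le_card inter_subset_left).trans (S.card_le i))) (hf.nonneg j)
        _ = Real.exp (-p) * S.deg f v + Real.exp (p * r) *
            ∑ j with v ∈ S.block j, f j * (#(S.block i ∩ S.block j) - 1) := by
            rw [deg, mul_sum, mul_sum, ← sum_add_distrib]
            exact sum_congr rfl fun j _ => by ring
        _ ≤ A := by
            rw [hf.deg_eq_one v hv, mul_one, hA]
            gcongr
            exact sum_mul_card_inter_sub_one_le hδ hcodeg hvi
  simp only [deg, sq, sum_mul_sum, subsetExpect_sum]
  calc _ ≤ ∑ i with v ∈ S.block i, ∑ j with v ∈ S.block j,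
        L * (f i * (f j * Real.exp (p * (#(S.block i ∩ S.block j) - 2)))) :=
        sum_le_sum fun i _ => sum_le_sum fun j _ =>
          hf.subsetExpect_residual_mul_residual_le hδ hcodeg hp i j
    _ = L * ∑ i with v ∈ S.block i, f i * ∑ j with v ∈ S.block j,
        f j * Real.exp (p * (#(S.block i ∩ S.block j) - 2)) := by simp only [mul_sum]
    _ ≤ L * ∑ i with v ∈ S.block i, f i * A := by
        gcongr with i hi
        exacts [hf.nonneg i, hrow i hi]
    _ = L * A := by rw [← sum_mul, ← deg, hf.deg_eq_one v hv, one_mul]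

lemma IsFracPartition.subsetExpect_free_mul_abs_deg_residual_sub_one_le
    (hf : S.IsFracPartition U f) (hδ : 0 ≤ δ) (hcodeg : ∀ u v, u ≠ v → S.codeg f u v ≤ δ)
    (hp : 0 < p) (hsmall : Real.exp (p * (4 * r ^ 2 * δ)) *
      (Real.exp (-p) + Real.exp (p * r) * (r * δ)) ≤ Real.exp (-p) + p ^ 4)
    {v : E} (hv : v ∈ U) :
    subsetExpect (nibbleProb p f)
      (fun R => S.free R {v} * |S.deg (S.residual p f R) v - 1|) ≤ 2 * p ^ 2 := by
  set X : Finset ι → ℝ := fun R => S.deg (S.residual p f R) v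
  have hpoint : ∀ R, S.free R {v} * |X R - 1| ≤
      p ^ 2 + (p ^ 2)⁻¹ * (X R ^ 2 + (-2 * X R + S.free R {v})) := fun R => by
    by_cases hR : S.free R {v} = 0
    · have hX0 : X R = 0 := deg_residual_eq_zero hR
      rw [hX0, hR]
      norm_num [sq_nonneg p]
    · have hR1 : S.free R {v} = 1 := if_pos (ite_ne_right_iff.1 hR).1
      have hamgm : 0 ≤ (p ^ 2)⁻¹ * ((p ^ 2 - |X R - 1|) ^ 2 + p ^ 2 * |X R - 1|) := by positivity
      have hexpand : (p ^ 2)⁻¹ * ((p ^ 2 - |X R - 1|) ^ 2 + p ^ 2 * |X R - 1|) =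
          p ^ 2 + (p ^ 2)⁻¹ * |X R - 1| ^ 2 - |X R - 1| := by field_simp; ring
      rw [sq_abs] at hexpand
      rw [hR1]
      linarith
  refine (subsetExpect_mono (nibbleProb_nonneg hp.le hf.nonneg) nibbleProb_le_one hpoint).trans ?_
  rw [subsetExpect_add, subsetExpect_const, subsetExpect_const_mul, subsetExpect_add,
    subsetExpect_add, subsetExpect_const_mul, hf.subsetExpect_free_singleton hv]
  have hsq := hf.subsetExpect_deg_residual_sq_le hδ hcodeg hp.le hv
  have hmean := hf.le_subsetExpect_deg_residual hp.le hv
  calc _ ≤ p ^ 2 + (p ^ 2)⁻¹ * p ^ 4 := by gcongr; linarith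
    _ = 2 * p ^ 2 := by field_simp; norm_num

lemma IsFracPartition.subsetExpect_conflictCost_le (hf : S.IsFracPartition U f) (hp : 0 ≤ p) :
    subsetExpect (nibbleProb p f) S.conflictCost ≤ p ^ 2 * r * #U := by
  set q := nibbleProb p f with hq
  have hq0 : ∀ i, 0 ≤ q i := nibbleProb_nonneg hp hf.nonneg
  have hrow : ∀ i, subsetExpect q (fun R => ∑ j with j ≠ i ∧ ¬Disjoint (S.block j) (S.block i),
      #(S.block i) * if {i, j} ⊆ R then 1 else 0) ≤ p ^ 2 * r * (f i * #(S.block i)) := fun i => by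
    have hpair : ∀ j ∈ ({j | j ≠ i ∧ ¬Disjoint (S.block j) (S.block i)} : Finset ι),
        (#(S.block i) : ℝ) * ∏ k ∈ {i, j}, q k = #(S.block i) * (q i * q j) := fun j hj => by
      rw [prod_pair (mem_filter.1 hj).2.1.symm]
    simp only [subsetExpect_sum, subsetExpect_const_mul, subsetExpect_subset]
    rw [sum_congr rfl hpair, ← mul_sum, ← mul_sum]
    rcases eq_or_ne (f i) 0 with hi | hi
    · rw [hq, nibbleProb_eq_zero hi, hi]; simp
    have hmeet : ∑ j with j ≠ i ∧ ¬Disjoint (S.block j) (S.block i), q j ≤ p * r := by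
      calc _ ≤ ∑ j with ¬Disjoint (S.block j) (S.block i), q j :=
            sum_le_sum_of_subset_of_nonneg (monotone_filter_right _ fun j _ hj => hj.2)
              fun j _ _ => hq0 j
        _ ≤ p * S.meet f (S.block i) := by
            rw [meet, mul_sum]
            exact sum_le_sum fun j _ => nibbleProb_le j
        _ ≤ p * r := by
            gcongr
            exact (hf.meet_le (hf.block_subset i hi)).trans (by exact_mod_cast S.card_le i)
    have hfi := hf.nonneg i
    calc _ ≤ #(S.block i) * (p * f i * (p * r)) := by
          gcongr
          · exact sum_nonneg fun j _ => hq0 j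
          · exact nibbleProb_le i
      _ = _ := by ring
  unfold conflictCost
  rw [subsetExpect_sum]
  refine (sum_le_sum fun i _ => hrow i).trans_eq ?_
  rw [← mul_sum, ← hf.sum_deg, sum_congr rfl hf.deg_eq_one]
  simp

end PartitionSystem

namespace PartitionSystem

variable {E ι : Type*} [Fintype ι] {r : ℕ} {S : PartitionSystem E ι r} {U : Finset E} {f : ι → ℝ}
  {p δ η : ℝ}

/-- The cost of the partition of `U` that starts with the blocks selected in `R`: the cost of these
blocks, of resolving their conflicts, of turning the residual weighting into a fractional partition,
and of rounding the latter with an error of `η` per point. -/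
noncomputable def nibbleCost (S : PartitionSystem E ι r) (U : Finset E) (f : ι → ℝ) (p η : ℝ)
    (R : Finset ι) : ℝ :=
  ∑ i ∈ R, S.cost i + S.conflictCost R + (S.total (S.residual p f R) +
    (1 + r) * ∑ v ∈ U, S.free R {v} * |S.deg (S.residual p f R) v - 1| +
    η * ∑ v ∈ U, S.free R {v})

lemma IsFracPartition.hasPartition_nibbleCost (hf : S.IsFracPartition U f)
    (hcodeg : ∀ u v, u ≠ v → S.codeg f u v ≤ δ) (hp : 0 ≤ p)
    (hround : ∀ U' g, S.IsFracPartition U' g →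
      (∀ u v, u ≠ v → S.codeg g u v ≤ Real.exp (p * r) * δ) →
      S.HasPartition U' (S.total g + η * #U'))
    {R : Finset ι} (hR : ∀ i ∈ R, f i ≠ 0) : S.HasPartition U (S.nibbleCost U f p η R) := by
  obtain ⟨g, hg, hgcodeg, hgtotal⟩ := (hf.residual (p := p) R).exists_isFracPartition
  have hcodeg' : ∀ u v, u ≠ v → S.codeg g u v ≤ Real.exp (p * r) * δ := fun u v huv =>
    (hgcodeg u v huv).trans ((hf.codeg_residual_le hp R u v).trans
      (mul_le_mul_of_nonneg_left (hcodeg u v huv) (Real.exp_pos _).le))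
  have hcard : (#(U \ R.biUnion S.block) : ℝ) = ∑ v ∈ U, S.free R {v} := by
    simpa using S.sum_sdiff_biUnion_block U R 1
  have hrest := hround _ g hg hcodeg'
  rw [hcard] at hrest
  rw [S.sum_sdiff_biUnion_block] at hgtotal
  refine (HasPartition.of_sdiff_biUnion (fun i hi => hf.block_subset i (hR i hi)) hrest).mono ?_
  unfold nibbleCost
  gcongr

lemma IsFracPartition.subsetExpect_nibbleCost_le (hf : S.IsFracPartition U f) (hδ : 0 ≤ δ)
    (hcodeg : ∀ u v, u ≠ v → S.codeg f u v ≤ δ) (hp : 0 < p) (hp1 : p ≤ 1)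
    (hsmall : Real.exp (p * (4 * r ^ 2 * δ)) *
      (Real.exp (-p) + Real.exp (p * r) * (r * δ)) ≤ Real.exp (-p) + p ^ 4) :
    subsetExpect (nibbleProb p f) (S.nibbleCost U f p η) ≤
      S.total f + (Real.exp (-p) * η + (3 * r + 4) * p ^ 2) * #U := by
  have hselected : ∑ i, S.cost i * nibbleProb p f i ≤ p * S.total f := by
    rw [total, mul_sum]
    refine sum_le_sum fun i _ => ?_
    rw [mul_left_comm]
    exact mul_le_mul_of_nonneg_left (nibbleProb_le i) (S.cost_nonneg i)
  have hexp : p + Real.exp (p * (r ^ 2 * δ)) * Real.exp (-p) ≤ 1 + 2 * p ^ 2 := by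
    have hgrowth : Real.exp (p * (r ^ 2 * δ)) * Real.exp (-p) ≤ Real.exp (-p) + p ^ 4 := by
      have hr : p * (r ^ 2 * δ) ≤ p * (4 * r ^ 2 * δ) := by
        gcongr; linarith [sq_nonneg (r : ℝ)]
      refine le_trans ?_ hsmall
      gcongr
      exact le_add_of_nonneg_right (by positivity)
    have htaylor := (abs_le.1 (Real.abs_exp_sub_one_sub_id_le (x := -p) (by
      rwa [abs_neg, abs_of_pos hp]))).2
    have hp4 : p ^ 4 ≤ p ^ 2 := pow_le_pow_of_le_one hp.le hp1 (by norm_num)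
    rw [neg_sq] at htaylor
    linarith
  have hdeviation : ∑ v ∈ U, subsetExpect (nibbleProb p f)
      (fun R => S.free R {v} * |S.deg (S.residual p f R) v - 1|) ≤ #U * (2 * p ^ 2) := by
    rw [← nsmul_eq_mul]
    exact sum_le_card_nsmul _ _ _ fun v hv =>
      hf.subsetExpect_free_mul_abs_deg_residual_sub_one_le hδ hcodeg hp hsmall hv
  have huncovered : ∑ v ∈ U, subsetExpect (nibbleProb p f) (fun R => S.free R {v}) =
      Real.exp (-p) * #U := by
    rw [sum_congr rfl fun v hv => hf.subsetExpect_free_singleton hv, sum_const, nsmul_eq_mul,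
      mul_comm]
  have htotal : (p + Real.exp (p * (r ^ 2 * δ)) * Real.exp (-p)) * S.total f ≤
      S.total f + 2 * p ^ 2 * #U := by
    nlinarith [mul_le_mul_of_nonneg_right hexp hf.total_nonneg,
      mul_le_mul_of_nonneg_left hf.total_le_card (by positivity : 0 ≤ 2 * p ^ 2)]
  unfold nibbleCost
  rw [subsetExpect_add, subsetExpect_add, subsetExpect_add, subsetExpect_add, subsetExpect_sum_mem,
    subsetExpect_const_mul, subsetExpect_const_mul, subsetExpect_sum, subsetExpect_sum, huncovered]
  linarith [hf.subsetExpect_conflictCost_le hp.le, mul_le_mul_of_nonneg_left hdeviation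
    (by positivity : (0 : ℝ) ≤ 1 + r), hf.subsetExpect_total_residual_le hδ hcodeg hp.le]

lemma IsFracPartition.hasPartition_nibble (hf : S.IsFracPartition U f) (hδ : 0 ≤ δ)
    (hcodeg : ∀ u v, u ≠ v → S.codeg f u v ≤ δ) (hp : 0 < p) (hp1 : p ≤ 1)
    (hsmall : Real.exp (p * (4 * r ^ 2 * δ)) *
      (Real.exp (-p) + Real.exp (p * r) * (r * δ)) ≤ Real.exp (-p) + p ^ 4)
    (hround : ∀ U' g, S.IsFracPartition U' g →
      (∀ u v, u ≠ v → S.codeg g u v ≤ Real.exp (p * r) * δ) →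
      S.HasPartition U' (S.total g + η * #U')) :
    S.HasPartition U (S.total f + (Real.exp (-p) * η + (3 * r + 4) * p ^ 2) * #U) := by
  obtain ⟨R, hR, hcost⟩ := exists_le_of_subsetExpect_le (nibbleProb_nonneg hp.le hf.nonneg)
    nibbleProb_le_one (hf.subsetExpect_nibbleCost_le (η := η) hδ hcodeg hp hp1 hsmall)
  exact (hf.hasPartition_nibbleCost hcodeg hp.le hround fun i hi hfi =>
    hR i hi (nibbleProb_eq_zero hfi)).mono hcost

end PartitionSystem

section Rounding

universe u v

variable {r : ℕ} {η δ p : ℝ}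

/-- Every fractional partition with codegrees at most `δ`, in a system with blocks of size at most
`r`, can be rounded to a partition at an extra cost of at most `η` per point. -/
def RoundsWithin (r : ℕ) (η δ : ℝ) : Prop :=
  ∀ (E : Type u) (ι : Type v) [Fintype ι] (S : PartitionSystem E ι r) (U : Finset E) (f : ι → ℝ),
    S.IsFracPartition U f → (∀ u v, u ≠ v → S.codeg f u v ≤ δ) →
      S.HasPartition U (S.total f + η * #U)

lemma RoundsWithin.mono {η' : ℝ} (h : RoundsWithin.{u, v} r η δ) (hη : η ≤ η') :
    RoundsWithin.{u, v} r η' δ := fun E ι _ S U f hf hcodeg =>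
  (h E ι S U f hf hcodeg).mono (by gcongr)

lemma roundsWithin_one : RoundsWithin.{u, v} r 1 δ := fun E ι _ S U f hf _ =>
  (PartitionSystem.hasPartition_card U).mono (by linarith [hf.total_nonneg])

lemma RoundsWithin.exists_nibble (h : RoundsWithin.{u, v} r η δ) (hδ : 0 < δ) (hp : 0 < p)
    (hp1 : p ≤ 1) :
    ∃ δ' > 0, RoundsWithin.{u, v} r (Real.exp (-p) * η + (3 * r + 4) * p ^ 2) δ' := by
  have hsecond : Filter.Tendsto (fun x : ℝ => Real.exp (p * (4 * r ^ 2 * x)) *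
      (Real.exp (-p) + Real.exp (p * r) * (r * x))) (nhds 0) (nhds (Real.exp (-p))) :=
    (by fun_prop : Continuous _).tendsto' _ _ (by simp)
  have hcodeg : Filter.Tendsto (fun x : ℝ => Real.exp (p * r) * x) (nhds 0) (nhds 0) :=
    (by fun_prop : Continuous _).tendsto' _ _ (mul_zero _)
  have hp4 : Real.exp (-p) < Real.exp (-p) + p ^ 4 := lt_add_of_pos_right _ (by positivity)
  obtain ⟨δ', ⟨hsmall, hδ'δ⟩, hδ'⟩ := ((((hsecond.eventually_le_const hp4).and
    (hcodeg.eventually_le_const hδ)).filter_mono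
      (nhdsWithin_le_nhds (s := Set.Ioi 0))).and self_mem_nhdsWithin).exists
  refine ⟨δ', hδ', fun E ι _ S U f hf hfcodeg => ?_⟩
  exact hf.hasPartition_nibble (le_of_lt hδ') hfcodeg hp hp1 hsmall fun U' g hg hgcodeg =>
    h E ι S U' g hg fun u v huv => (hgcodeg u v huv).trans hδ'δ

lemma exists_roundsWithin (r : ℕ) (hη : 0 < η) : ∃ δ > 0, RoundsWithin.{u, v} r η δ := by
  set C : ℝ := 3 * r + 4 with hC
  have : 0 < C := by positivity
  set p : ℝ := min 1 (η / (4 * C))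
  have hp0 : 0 < p := lt_min one_pos (by positivity)
  have hexp : Real.exp (-p) ≤ 1 - p / 2 := by
    rw [Real.exp_neg, inv_le_iff_one_le_mul₀ (Real.exp_pos p)]
    nlinarith [Real.add_one_le_exp p, min_le_left 1 (η / (4 * C))]
  have hiterate : ∀ n : ℕ, ∃ δ > 0, RoundsWithin.{u, v} r (Real.exp (-p) ^ n + 2 * C * p) δ :=
    fun n => by
      induction n with
      | zero => exact ⟨1, one_pos, roundsWithin_one.mono
          (by rw [pow_zero, le_add_iff_nonneg_right]; positivity)⟩
      | succ n ih =>
        obtain ⟨δ, hδ, h⟩ := ih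
        obtain ⟨δ', hδ', h'⟩ := h.exists_nibble hδ hp0 (min_le_left _ _)
        refine ⟨δ', hδ', h'.mono ?_⟩
        rw [pow_succ (Real.exp (-p)), ← hC]
        nlinarith [mul_le_mul_of_nonneg_right hexp (by positivity : 0 ≤ 2 * C * p)]
  obtain ⟨n, hn⟩ := exists_pow_lt_of_lt_one (half_pos hη)
    (Real.exp_lt_one_iff.2 (neg_lt_zero.2 hp0))
  obtain ⟨δ, hδ, h⟩ := hiterate n
  refine ⟨δ, hδ, h.mono ?_⟩
  have hCp : p * (4 * C) ≤ η := (le_div_iff₀ (by positivity)).1 (min_le_right _ _)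
  linarith

end Rounding

namespace PartitionSystem

variable {E ι : Type*} {r : ℕ} {S : PartitionSystem E ι r}

lemma HasPartition.existsUnique_mem_block {U : Finset E} {κ : ℝ} (h : S.HasPartition U κ) :
    ∃ M : Finset ι, (∀ v ∈ U, ∃! i, i ∈ M ∧ v ∈ S.block i) ∧ ∑ i ∈ M, S.cost i ≤ κ := by
  obtain ⟨M, hdisj, rfl, hcost⟩ := h
  refine ⟨M, fun v hv => ?_, hcost⟩
  obtain ⟨i, hi, hvi⟩ := mem_biUnion.1 hv
  exact ⟨i, ⟨hi, hvi⟩, fun j hj =>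
    hdisj.elim hj.1 hi (not_disjoint_iff.2 ⟨v, hj.2, hvi⟩)⟩

lemma sum_average {α : Type*} {s : Finset α} {f : α → ι → ℝ} {D : ℝ} (A : Finset ι) :
    ∑ i ∈ A, (∑ a ∈ s, f a i) / D = (∑ a ∈ s, ∑ i ∈ A, f a i) / D := by
  rw [← sum_div, sum_comm]

variable [Fintype ι] {U : Finset E} {f : ι → ℝ}

lemma IsWeighting.deg_eq_zero (hf : S.IsWeighting U f) {v : E} (hv : v ∉ U) : S.deg f v = 0 :=
  sum_eq_zero fun i hi => by
    by_contra hi0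
    exact hv (hf.block_subset i hi0 (mem_filter.1 hi).2)

lemma IsWeighting.codeg_le_deg_left (hf : S.IsWeighting U f) (u v : E) :
    S.codeg f u v ≤ S.deg f u :=
  sum_le_sum_of_subset_of_nonneg (monotone_filter_right _ fun _ _ h => h.1)
    fun i _ _ => hf.nonneg i

lemma IsWeighting.codeg_le_deg_right (hf : S.IsWeighting U f) (u v : E) :
    S.codeg f u v ≤ S.deg f v :=
  sum_le_sum_of_subset_of_nonneg (monotone_filter_right _ fun _ _ h => h.2)
    fun i _ _ => hf.nonneg i

lemma IsFracPartition.deg_eq (hf : S.IsFracPartition U f) (v : E) :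
    S.deg f v = if v ∈ U then 1 else 0 := by
  split_ifs with hv
  exacts [hf.deg_eq_one v hv, hf.deg_eq_zero hv]

lemma IsFracPartition.codeg_le (hf : S.IsFracPartition U f) (u v : E) :
    S.codeg f u v ≤ if u ∈ U ∧ v ∈ U then 1 else 0 := by
  have hu := hf.codeg_le_deg_left u v
  have hv := hf.codeg_le_deg_right u v
  rw [hf.deg_eq] at hu hv
  grind

section Average

variable {α : Type*} {s : Finset α} {f : α → ι → ℝ} {D : ℝ}

lemma total_average_le {τ : ℝ} (hD : 0 ≤ D) (hτ : ∀ a ∈ s, S.total (f a) ≤ τ) :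
    S.total (fun i => (∑ a ∈ s, f a i) / D) ≤ #s * τ / D := by
  have htotal : S.total (fun i => (∑ a ∈ s, f a i) / D) = (∑ a ∈ s, S.total (f a)) / D := by
    simp only [total, ← mul_div_assoc, mul_sum]
    exact sum_average univ
  rw [htotal, ← nsmul_eq_mul]
  gcongr
  exact sum_le_card_nsmul s _ τ hτ

lemma isFracPartition_average [Fintype E] {U : α → Finset E}
    (hf : ∀ a ∈ s, S.IsFracPartition (U a) (f a)) (hD : 0 < D)
    (hdeg : ∀ v, (#{a ∈ s | v ∈ U a} : ℝ) = D) :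
    S.IsFracPartition univ fun i => (∑ a ∈ s, f a i) / D where
  nonneg i := div_nonneg (sum_nonneg fun a ha => (hf a ha).nonneg i) hD.le
  block_subset _ _ := subset_univ _
  deg_eq_one v _ := by
    rw [deg, sum_average, div_eq_one_iff_eq hD.ne', ← hdeg v, ← sum_boole]
    exact sum_congr rfl fun a ha => (hf a ha).deg_eq v

lemma codeg_average_le {U : α → Finset E} (hf : ∀ a ∈ s, S.IsFracPartition (U a) (f a))
    (hD : 0 < D) {δ : ℝ} {u v : E} (huv : (#{a ∈ s | u ∈ U a ∧ v ∈ U a} : ℝ) ≤ δ * D) :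
    S.codeg (fun i => (∑ a ∈ s, f a i) / D) u v ≤ δ := by
  rw [codeg, sum_average, div_le_iff₀ hD]
  refine le_trans ?_ huv
  rw [← sum_boole]
  exact sum_le_sum fun a ha => (hf a ha).codeg_le u v

end Average

end PartitionSystem

section CliqueSystem

variable {V : Type*} {G : SimpleGraph V}

/-- The edges of `G`, encoded as the cliques with two vertices. -/
abbrev EdgeClique (G : SimpleGraph V) : Type _ :=
  {T : Finset V // #T = 2 ∧ G.IsClique (T : Set V)}

/-- The cliques of `G` with at least `2` and at most `m` vertices. -/
abbrev BoundedClique (G : SimpleGraph V) (m : ℕ) : Type _ :=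
  {K : Finset V // G.IsClique (K : Set V) ∧ 2 ≤ #K ∧ #K ≤ m}

variable [Fintype V]

variable (G) in
/-- The edges of `G` with both ends in `A`. -/
noncomputable def edgesIn (A : Finset V) : Finset (EdgeClique G) := {T | T.1 ⊆ A}

lemma mem_edgesIn {A : Finset V} {T : EdgeClique G} : T ∈ edgesIn G A ↔ T.1 ⊆ A := by
  simp [edgesIn]

lemma edgesIn_univ : edgesIn G univ = univ := by simp [edgesIn]

lemma edgesIn_subset {A B : Finset V} (h : A ⊆ B) : edgesIn G A ⊆ edgesIn G B := fun _ hT =>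
  mem_edgesIn.2 ((mem_edgesIn.1 hT).trans h)

lemma edgesIn_coe (T : EdgeClique G) : edgesIn G T = {T} := by
  ext T'
  rw [mem_edgesIn, mem_singleton]
  refine ⟨fun h => Subtype.ext (eq_of_subset_of_card_le h ?_), fun h => h ▸ Subset.rfl⟩
  rw [T.2.1, T'.2.1]

lemma sum_edgesIn {M : Type*} [AddCommMonoid M] (w : Finset V → M) (A : Finset V) :
    ∑ T ∈ edgesIn G A, w T =
      ∑ T ∈ A.powersetCard 2, if G.IsClique (T : Set V) then w T else 0 := by
  rw [← sum_filter]
  refine sum_bij (fun T _ => T.1) (fun T hT => ?_) (fun _ _ _ _ => Subtype.ext) (fun T hT => ?_)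
    fun _ _ => rfl
  · exact mem_filter.2 ⟨mem_powersetCard.2 ⟨mem_edgesIn.1 hT, T.2.1⟩, T.2.2⟩
  · rw [mem_filter, mem_powersetCard] at hT
    exact ⟨⟨T, hT.1.2, hT.2⟩, mem_edgesIn.2 hT.1.1, rfl⟩

lemma sum_edgesIn_of_isClique {M : Type*} [AddCommMonoid M] (w : Finset V → M) {K : Finset V}
    (hK : G.IsClique (K : Set V)) : ∑ T ∈ edgesIn G K, w T = ∑ T ∈ K.powersetCard 2, w T := by
  rw [sum_edgesIn]
  exact sum_congr rfl fun T hT => if_pos (hK.subset (coe_subset.2 (mem_powersetCard.1 hT).1))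

lemma sum_edgesIn_le {w : Finset V → ℝ} {l : ℝ} (hl : 0 ≤ l) {A : Finset V}
    (hw : ∀ K ⊆ A, 2 ≤ #K → G.IsClique (K : Set V) → ∑ T ∈ edgesIn G K, w T ≤ l * (#K - 1)) :
    ∑ T ∈ edgesIn G A, w T ≤ l * ((#A : ℝ) ^ 2 / 4) := by
  set b : Finset V → ℝ := fun T => if G.IsClique (T : Set V) then max (w T) 0 else 0 with hb
  have hb_nonneg : ∀ T, 0 ≤ b T := fun T => by
    rw [hb]; dsimp only; split_ifs; exacts [le_max_right _ _, le_rfl]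
  have hb_pos : ∀ T, 0 < b T → G.IsClique (T : Set V) ∧ b T = w T := fun T hT => by
    simp only [hb] at hT ⊢
    split_ifs at hT ⊢ with hTG
    · exact ⟨hTG, max_eq_left ((lt_max_iff.1 hT).resolve_right (lt_irrefl 0)).le⟩
    · exact absurd hT (lt_irrefl 0)
  rw [sum_edgesIn]
  refine le_trans (sum_le_sum fun T _ => ?_)
    (sum_powersetCard_two_le hb_nonneg hl fun K hKA hK hpos => ?_)
  · simp only [hb]
    split_ifs
    exacts [le_max_left _ _, le_rfl]
  · have hclique : G.IsClique (K : Set V) := fun u hu v hv huv => by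
      have hpair : {u, v} ∈ K.powersetCard 2 :=
        mem_powersetCard.2 ⟨insert_subset hu (singleton_subset_iff.2 hv), card_pair huv⟩
      exact (hb_pos _ (hpos _ hpair)).1 (by simp) (by simp) huv
    rw [sum_congr rfl fun T hT => (hb_pos T (hpos T hT)).2, ← sum_edgesIn_of_isClique w hclique]
    exact hw K hKA hK hclique

lemma card_edgesIn_le (A : Finset V) : #(edgesIn G A) ≤ (#A).choose 2 := by
  rw [card_eq_sum_ones, sum_edgesIn (fun _ => 1), ← sum_filter, ← card_eq_sum_ones,
    ← card_powersetCard]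
  exact card_filter_le _ _

lemma card_edgesIn_of_isClique {K : Finset V} (hK : G.IsClique (K : Set V)) :
    #(edgesIn G K) = (#K).choose 2 := by
  rw [card_eq_sum_ones, sum_edgesIn_of_isClique (fun _ => 1) hK, ← card_eq_sum_ones,
    card_powersetCard]

lemma sub_one_le_choose_two {k : ℕ} (hk : 2 ≤ k) : (k : ℝ) - 1 ≤ k.choose 2 := by
  have hk' : (2 : ℝ) ≤ k := by exact_mod_cast hk
  rw [Nat.cast_choose_two]
  nlinarith

variable {m : ℕ}

variable (G) in
/-- The partition system whose blocks are the edge sets of the cliques of `G` with at most `m`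
vertices, a clique with `k` vertices having cost `k - 1`. -/
noncomputable def cliqueSystem (hm : 2 ≤ m) :
    PartitionSystem (EdgeClique G) (BoundedClique G m) (m.choose 2) where
  block K := edgesIn G K
  cost K := #K.1 - 1
  single T := ⟨T, T.2.2, T.2.1.ge, T.2.1.trans_le hm⟩
  block_single := edgesIn_coe
  cost_nonneg K := by
    have hK : (2 : ℝ) ≤ #K.1 := by exact_mod_cast K.2.2.1
    linarith
  cost_le_card K := by
    rw [card_edgesIn_of_isClique K.2.1]
    exact sub_one_le_choose_two K.2.2.1
  card_le K := by
    rw [card_edgesIn_of_isClique K.2.1]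
    exact Nat.choose_le_choose 2 K.2.2.2

variable {hm : 2 ≤ m}

lemma exists_isFracPartition_edgesIn {A : Finset V} (hA : #A = m) :
    ∃ g, (cliqueSystem G hm).IsFracPartition (edgesIn G A) g ∧
      (cliqueSystem G hm).total g ≤ (m : ℝ) ^ 2 / 4 + 1 := by
  refine PartitionSystem.exists_isFracPartition_of_dual (fun w l hl hw => ?_) one_pos
  obtain ⟨w, rfl⟩ : ∃ w' : Finset V → ℝ, w = fun T => w' T.1 :=
    ⟨Function.extend Subtype.val w 0,
      funext fun T => (Subtype.val_injective.extend_apply w 0 T).symm⟩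
  rw [← hA]
  exact sum_edgesIn_le hl fun K hKA hK hKG =>
    hw ⟨K, hKG, hK, hA ▸ card_le_card hKA⟩ (edgesIn_subset hKA)

lemma card_filter_subset_powersetCard_univ {W : Finset V} (hW : #W ≤ m) :
    #{A ∈ (univ : Finset V).powersetCard m | W ⊆ A} =
      (Fintype.card V - #W).choose (m - #W) := by
  rw [card_filter_powersetCard_subset W univ m (subset_univ _) hW, card_univ]

lemma sub_two_mul_card_filter_pair_subset_le (hm : 3 ≤ m) {T T' : Finset V} (hT : #T = 2)
    (hT' : #T' = 2) (hne : T ≠ T') :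
    (Fintype.card V - 2) * #{A ∈ (univ : Finset V).powersetCard m | T ⊆ A ∧ T' ⊆ A} ≤
      (m - 2) * (Fintype.card V - 2).choose (m - 2) := by
  have hunion : 3 ≤ #(T ∪ T') := by
    have hlt : #T < #(T ∪ T') := card_lt_card (Finset.ssubset_iff_subset_ne.2 ⟨subset_union_left,
      fun h => hne (eq_of_subset_of_card_le (union_eq_left.1 h.symm) (by omega)).symm⟩)
    omega
  obtain ⟨W, hW, hW3⟩ := exists_subset_card_eq hunion
  have hn : 3 ≤ Fintype.card V := hW3 ▸ card_le_univ W
  calc (Fintype.card V - 2) * #{A ∈ (univ : Finset V).powersetCard m | T ⊆ A ∧ T' ⊆ A}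
      ≤ (Fintype.card V - 2) * #{A ∈ (univ : Finset V).powersetCard m | W ⊆ A} :=
        Nat.mul_le_mul_left _ (card_le_card (monotone_filter_right _ fun A _ hA =>
          hW.trans (union_subset hA.1 hA.2)))
    _ = (Fintype.card V - 3 + 1) * (Fintype.card V - 3).choose (m - 3) := by
        rw [card_filter_subset_powersetCard_univ (hW3.trans_le hm), hW3]
        congr 1
        omega
    _ = (m - 2) * (Fintype.card V - 2).choose (m - 2) := by
        rw [Nat.add_one_mul_choose_eq, mul_comm, show m - 3 + 1 = m - 2 by omega,
          show Fintype.card V - 3 + 1 = Fintype.card V - 2 by omega]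

lemma card_filter_pair_subset_le (hm : 3 ≤ m) (hn : 2 < Fintype.card V) {T T' : Finset V}
    (hT : #T = 2) (hT' : #T' = 2) (hne : T ≠ T') :
    (#{A ∈ (univ : Finset V).powersetCard m | T ⊆ A ∧ T' ⊆ A} : ℝ) ≤
      ((m : ℝ) - 2) / (Fintype.card V - 2) * (Fintype.card V - 2).choose (m - 2) := by
  have hcount := (Nat.cast_le (α := ℝ)).2 (sub_two_mul_card_filter_pair_subset_le hm hT hT' hne)
  push_cast [Nat.cast_sub (Nat.le_of_succ_le hm), Nat.cast_sub hn.le] at hcount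
  have hn2 : (0 : ℝ) < Fintype.card V - 2 := sub_pos.2 (by exact_mod_cast hn)
  rwa [div_mul_eq_mul_div, le_div_iff₀' hn2]

lemma exists_isFracPartition_univ (hm : 3 ≤ m) (hn : m ≤ Fintype.card V) :
    ∃ f, (cliqueSystem G (Nat.le_of_succ_le hm)).IsFracPartition univ f ∧
      (∀ T T', T ≠ T' →
        (cliqueSystem G (Nat.le_of_succ_le hm)).codeg f T T' ≤
          ((m : ℝ) - 2) / (Fintype.card V - 2)) ∧
      (cliqueSystem G (Nat.le_of_succ_le hm)).total f ≤
        (Fintype.card V).choose 2 * (((m : ℝ) ^ 2 / 4 + 1) / m.choose 2) := by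
  have hm2 : 2 ≤ m := Nat.le_of_succ_le hm
  choose! g hg hg_total using fun (A : Finset V) (hA : #A = m) =>
    exists_isFracPartition_edgesIn (G := G) (hm := hm2) hA
  replace hg : ∀ A ∈ powersetCard m univ,
      (cliqueSystem G hm2).IsFracPartition (edgesIn G A) (g A) := fun A hA =>
    hg A (mem_powersetCard.1 hA).2
  set D : ℕ := (Fintype.card V - 2).choose (m - 2)
  have hD : (0 : ℝ) < D := by exact_mod_cast Nat.choose_pos (by omega)
  refine ⟨_, PartitionSystem.isFracPartition_average hg hD fun T => ?_, fun T T' hne =>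
    PartitionSystem.codeg_average_le hg hD ?_, (PartitionSystem.total_average_le hD.le fun A hA =>
      hg_total A (mem_powersetCard.1 hA).2).trans_eq ?_⟩
  · simp only [mem_edgesIn]
    rw [card_filter_subset_powersetCard_univ (T.2.1.trans_le hm2), T.2.1]
  · simp only [mem_edgesIn]
    exact card_filter_pair_subset_le hm (by omega) T.2.1 T'.2.1 (Subtype.coe_ne_coe.2 hne)
  · have hchoose : ((Fintype.card V).choose m : ℝ) * m.choose 2 =
        (Fintype.card V).choose 2 * D := by
      exact_mod_cast Nat.choose_mul (n := Fintype.card V) hm2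
    have hm_pos : (0 : ℝ) < m.choose 2 := by exact_mod_cast Nat.choose_pos hm2
    rw [card_powersetCard, card_univ, ← mul_div_assoc, div_eq_div_iff hD.ne' hm_pos.ne']
    linear_combination ((m : ℝ) ^ 2 / 4 + 1) * hchoose

end CliqueSystem

section Decomposition

variable {V : Type} [Fintype V] [DecidableEq V] {G : SimpleGraph V} {t : ℕ}

lemma isIntDecomp_ite {M : Finset (Finset V)} (hM : ∀ K ∈ M, IsCliqueOf G K)
    (hunique : ∀ T : Finset V, #T = t → G.IsClique (T : Set V) → ∃! K, K ∈ M ∧ T ⊆ K) :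
    IsIntDecomp t G fun K => if K ∈ M then 1 else 0 := by
  refine ⟨⟨fun K => by positivity, fun K hK => if_neg fun hKM => hK (hM K hKM),
    fun T hT hTG => ?_⟩, fun K => (ite_eq_or_eq _ _ _).symm⟩
  obtain ⟨K, ⟨hKM, hTK⟩, hK⟩ := hunique T hT hTG
  rw [sum_eq_single K (fun L hL hLK => if_neg fun hLM => hLK (hK L ⟨hLM, (mem_filter.1 hL).2⟩))
    fun h => absurd (mem_filter.2 ⟨mem_univ K, hTK⟩) h, if_pos hKM]

lemma cliqueCost_ite (c : ℕ → ℝ) (M : Finset (Finset V)) :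
    cliqueCost c (fun K => if K ∈ M then 1 else 0) = ∑ K ∈ M, c #K := by
  simp [cliqueCost]

lemma piInt_le_cliqueCost {c : ℕ → ℝ} (hc : ∀ k, 1 ≤ k → 0 ≤ c k) {f : Finset V → ℝ}
    (hf : IsIntDecomp t G f) : piInt t G c ≤ cliqueCost c f := by
  refine csInf_le ⟨0, ?_⟩ ⟨f, hf, rfl⟩
  rintro _ ⟨g, hg, rfl⟩
  refine sum_nonneg fun K _ => ?_
  by_cases hK : IsCliqueOf G K
  · exact mul_nonneg (hc _ hK.1.card_pos) (hg.1.1 K)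
  · rw [hg.1.2.1 K hK, mul_zero]

lemma exists_isIntDecomp_of_hasPartition {m : ℕ} {hm : 2 ≤ m} {κ : ℝ}
    (h : (cliqueSystem G hm).HasPartition (edgesIn G univ) κ) :
    ∃ f, IsIntDecomp 2 G f ∧ cliqueCost (fun i => (i : ℝ) - 1) f ≤ κ := by
  obtain ⟨M, hM, hcost⟩ := h.existsUnique_mem_block
  refine ⟨_, isIntDecomp_ite (M := M.map (Function.Embedding.subtype _)) (fun K hK => ?_)
    fun T hT hTG => ?_, ?_⟩
  · obtain ⟨K, -, rfl⟩ := mem_map.1 hK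
    exact ⟨card_pos.1 (zero_lt_two.trans_le K.2.2.1), K.2.1⟩
  · obtain ⟨K, ⟨hKM, hTK⟩, hK⟩ := hM ⟨T, hT, hTG⟩ (mem_edgesIn.2 (subset_univ _))
    refine ⟨K, ⟨mem_map_of_mem _ hKM, mem_edgesIn.1 hTK⟩, ?_⟩
    rintro _ ⟨hL, hTL⟩
    obtain ⟨L, hLM, rfl⟩ := mem_map.1 hL
    exact congrArg Subtype.val (hK L ⟨hLM, mem_edgesIn.2 hTL⟩)
  · rw [cliqueCost_ite, sum_map]
    exact hcost

end Decomposition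

lemma exists_forall_hasPartition_cliqueSystem {m : ℕ} (hm : 3 ≤ m) {η : ℝ} (hη : 0 < η) :
    ∃ N : ℕ, ∀ (V : Type) [Fintype V], N ≤ Fintype.card V → ∀ G : SimpleGraph V,
      (cliqueSystem G (Nat.le_of_succ_le hm)).HasPartition (edgesIn G univ)
        ((Fintype.card V).choose 2 * (((m : ℝ) ^ 2 / 4 + 1) / m.choose 2 + η)) := by
  obtain ⟨δ, hδ, hround⟩ := exists_roundsWithin.{0, 0} (m.choose 2) hη
  obtain ⟨N, hN⟩ := exists_nat_ge (((m : ℝ) - 2) / δ + 2)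
  refine ⟨max N m, fun V _ hV G => ?_⟩
  have hNV : (N : ℝ) ≤ Fintype.card V := by exact_mod_cast (le_max_left _ _).trans hV
  have hmV : m ≤ Fintype.card V := (le_max_right _ _).trans hV
  obtain ⟨f, hf, hcodeg, htotal⟩ := exists_isFracPartition_univ (G := G) hm hmV
  have hδV : ((m : ℝ) - 2) / (Fintype.card V - 2) ≤ δ := by
    have hV2 : (2 : ℝ) < Fintype.card V := by exact_mod_cast (show 2 < Fintype.card V by omega)
    rw [div_le_iff₀ (sub_pos.2 hV2), ← div_le_iff₀' hδ]
    linarith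
  have hedges : (#(edgesIn G univ) : ℝ) ≤ (Fintype.card V).choose 2 := by
    exact_mod_cast card_edgesIn_le (G := G) univ
  rw [← edgesIn_univ] at hf
  refine (hround _ _ _ _ f hf fun T T' hne => (hcodeg T T' hne).trans hδV).mono ?_
  linarith [mul_le_mul_of_nonneg_left hedges hη.le]

lemma sq_div_four_add_one_div_choose_two_le {ε : ℝ} (hε : 0 < ε) {m : ℕ} (hm : 4 / ε + 4 ≤ m) :
    ((m : ℝ) ^ 2 / 4 + 1) / m.choose 2 ≤ (1 + ε / 2) / 2 := by
  have hm4 : (0 : ℝ) < m - 4 := (div_pos four_pos hε).trans_le (by linarith)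
  have hεm : 4 ≤ ε * (m - 4) := by
    rw [← div_le_iff₀' hε]; linarith
  rw [Nat.cast_choose_two, div_le_iff₀ (by nlinarith)]
  nlinarith [mul_pos hε hm4, mul_le_mul_of_nonneg_right hεm hm4.le]

theorem stmt0_general {ε : ℝ} (hε : 0 < ε) :
    ∃ N : ℕ, ∀ (V : Type) [Fintype V] [DecidableEq V], N ≤ Fintype.card V →
      ∀ G : SimpleGraph V,
        (∃ f : Finset V → ℝ, IsIntDecomp 2 G f ∧
          cliqueCost (fun i => (i : ℝ) - 1) f ≤ (1 + ε) * (Fintype.card V : ℝ) ^ 2 / 4) ∧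
        piInt 2 G (fun i => (i : ℝ) - 1) ≤ (1 + ε) * (Fintype.card V : ℝ) ^ 2 / 4 := by
  obtain ⟨q, hq⟩ := exists_nat_ge (4 / ε)
  obtain ⟨N, hN⟩ := exists_forall_hasPartition_cliqueSystem (m := q + 4) (by omega)
    (show 0 < ε / 4 by positivity)
  refine ⟨N, fun V _ _ hV G => ?_⟩
  have hratio := sq_div_four_add_one_div_choose_two_le (m := q + 4) hε (by push_cast; linarith)
  have hchoose : ((Fintype.card V).choose 2 : ℝ) ≤ (Fintype.card V : ℝ) ^ 2 / 2 := by
    rw [Nat.cast_choose_two]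
    nlinarith [(Fintype.card V).cast_nonneg (α := ℝ)]
  obtain ⟨f, hf, hcost⟩ := exists_isIntDecomp_of_hasPartition ((hN V hV G).mono <|
    calc _ ≤ (Fintype.card V : ℝ) ^ 2 / 2 * ((1 + ε / 2) / 2 + ε / 4) := by gcongr
      _ = (1 + ε) * (Fintype.card V : ℝ) ^ 2 / 4 := by ring)
  have hcost_nonneg : ∀ k : ℕ, 1 ≤ k → (0 : ℝ) ≤ k - 1 := fun k hk =>
    sub_nonneg.2 (by exact_mod_cast hk)
  exact ⟨⟨f, hf, hcost⟩, (piInt_le_cliqueCost hcost_nonneg hf).trans hcost⟩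

/-- Erdős's conjecture, asymptotically (Theorem 1.4): with costs `c_i = i - 1`,
every `n`-vertex graph admits a partition of its edges into cliques of total
cost at most `(1 + ε) n² / 4`; equivalently `π₂(G, c) ≤ (1 + ε) n² / 4`. -/
theorem stmt0 :
    ∀ ε : ℝ, 0 < ε → ∃ N : ℕ, ∀ n : ℕ, N ≤ n → ∀ G : SimpleGraph (Fin n),
      (∃ f : Finset (Fin n) → ℝ, IsIntDecomp 2 G f ∧
          cliqueCost (fun i => (i : ℝ) - 1) f ≤ (1 + ε) * (n : ℝ) ^ 2 / 4) ∧
      piInt 2 G (fun i => (i : ℝ) - 1) ≤ (1 + ε) * (n : ℝ) ^ 2 / 4 := by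
  intro ε hε
  obtain ⟨N, hN⟩ := stmt0_general hε
  exact ⟨N, fun n hn G => by simpa using hN (Fin n) (by simpa using hn) G⟩
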